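/- arXiv:1605.06429 — 3 statements merged into one kernel-verified Lean document; each statement's English description precedes it below -/
import Mathlib

section
/- Existence and characterisation of the worst-case volatility (Lemma on the optimal volatility): for every L > 0 there exist constants C₁ > 0 and ψ₁ > 0 such that for every (t,s,y) ∈ D, every ϑ̃ ∈ [−L,L], and every ψ ∈ (0,ψ₁), the function ς ↦ H^ψ(t,s,y; V̄_s(t,s) + ϑ̃ψ, ς) on [0,K] attains its minimum over [0,K] at some point ς* lying in the open interval (0,K), which satisfies the first-order condition ∂H^ψ/∂ς (t,s,y; V̄_s(t,s) + ϑ̃ψ, ς*) = 0 and the estimate |ς* − σ^ψ(t,s,y)| ≤ C₁ ψ². -/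
open Set

/-- The data of the hedging problem with small uncertainty aversion: the constants
`T, K, ε, y_l, y_u`, the reference volatility `σ̄` (`sb`), the reference value `V̄` (`V`)
with its `s`-derivatives `Vs, Vss`, the penalty function `f` with its `ς`-derivatives
`f1, ..., f4`, the utility `U` with derivatives `U1, U2, U3`, and the correction terms
`w̃` (`wt`) and `ŵ` (`wh`) together with their partial derivatives. -/
structure HedgeData where
  T : ℝ
  K : ℝ
  eps : ℝ
  yl : ℝ
  yu : ℝ
  sb : ℝ → ℝ → ℝ
  V : ℝ → ℝ → ℝ
  Vs : ℝ → ℝ → ℝ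
  Vss : ℝ → ℝ → ℝ
  f : ℝ → ℝ → ℝ → ℝ → ℝ
  f1 : ℝ → ℝ → ℝ → ℝ → ℝ
  f2 : ℝ → ℝ → ℝ → ℝ → ℝ
  f3 : ℝ → ℝ → ℝ → ℝ → ℝ
  f4 : ℝ → ℝ → ℝ → ℝ → ℝ
  U : ℝ → ℝ
  U1 : ℝ → ℝ
  U2 : ℝ → ℝ
  U3 : ℝ → ℝ
  wt : ℝ → ℝ → ℝ → ℝ
  wtT : ℝ → ℝ → ℝ → ℝ
  wtS : ℝ → ℝ → ℝ → ℝ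
  wtY : ℝ → ℝ → ℝ → ℝ
  wtSS : ℝ → ℝ → ℝ → ℝ
  wtSY : ℝ → ℝ → ℝ → ℝ
  wtYY : ℝ → ℝ → ℝ → ℝ
  wh : ℝ → ℝ → ℝ → ℝ
  whT : ℝ → ℝ → ℝ → ℝ
  whS : ℝ → ℝ → ℝ → ℝ
  whY : ℝ → ℝ → ℝ → ℝ
  whSS : ℝ → ℝ → ℝ → ℝ
  whSY : ℝ → ℝ → ℝ → ℝ
  whYY : ℝ → ℝ → ℝ → ℝ

/-- The candidate value function `w^ψ(t,s,y) = U(y) - U'(y) w̃(t,s,y) ψ + U'(y) ŵ(t,s,y) ψ²`. -/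
noncomputable def HedgeData.wPsi (d : HedgeData) (ψ t s y : ℝ) : ℝ :=
  d.U y - d.U1 y * d.wt t s y * ψ + d.U1 y * d.wh t s y * ψ ^ 2

/-- Partial derivative `w^ψ_t`. -/
noncomputable def HedgeData.wPsiT (d : HedgeData) (ψ t s y : ℝ) : ℝ :=
  -(d.U1 y * d.wtT t s y) * ψ + d.U1 y * d.whT t s y * ψ ^ 2

/-- Partial derivative `w^ψ_y`. -/
noncomputable def HedgeData.wPsiY (d : HedgeData) (ψ t s y : ℝ) : ℝ :=
  d.U1 y - (d.U2 y * d.wt t s y + d.U1 y * d.wtY t s y) * ψ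
    + (d.U2 y * d.wh t s y + d.U1 y * d.whY t s y) * ψ ^ 2

/-- Partial derivative `w^ψ_ss`. -/
noncomputable def HedgeData.wPsiSS (d : HedgeData) (ψ t s y : ℝ) : ℝ :=
  -(d.U1 y * d.wtSS t s y) * ψ + d.U1 y * d.whSS t s y * ψ ^ 2

/-- Partial derivative `w^ψ_sy`. -/
noncomputable def HedgeData.wPsiSY (d : HedgeData) (ψ t s y : ℝ) : ℝ :=
  -(d.U2 y * d.wtS t s y + d.U1 y * d.wtSY t s y) * ψ
    + (d.U2 y * d.whS t s y + d.U1 y * d.whSY t s y) * ψ ^ 2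

/-- Partial derivative `w^ψ_yy`. -/
noncomputable def HedgeData.wPsiYY (d : HedgeData) (ψ t s y : ℝ) : ℝ :=
  d.U2 y - (d.U3 y * d.wt t s y + 2 * d.U2 y * d.wtY t s y + d.U1 y * d.wtYY t s y) * ψ
    + (d.U3 y * d.wh t s y + 2 * d.U2 y * d.whY t s y + d.U1 y * d.whYY t s y) * ψ ^ 2

/-- `σ̃(t,s,y) = σ̄(t,s) s² V̄_ss(t,s) / f''(t,s,y;σ̄(t,s))`. -/
noncomputable def HedgeData.sigmaTilde (d : HedgeData) (t s y : ℝ) : ℝ :=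
  d.sb t s * s ^ 2 * d.Vss t s / d.f2 t s y (d.sb t s)

/-- `θ̃(t,s,y) = w̃_s(t,s,y) + (U'(y)/U''(y)) w̃_sy(t,s,y)`. -/
noncomputable def HedgeData.thetaTilde (d : HedgeData) (t s y : ℝ) : ℝ :=
  d.wtS t s y + d.U1 y / d.U2 y * d.wtSY t s y

/-- The candidate volatility `σ^ψ = σ̄ + σ̃ ψ`. -/
noncomputable def HedgeData.sigmaPsi (d : HedgeData) (ψ t s y : ℝ) : ℝ :=
  d.sb t s + d.sigmaTilde t s y * ψ

/-- The candidate strategy `θ^ψ = V̄_s + θ̃ ψ`. -/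
noncomputable def HedgeData.thetaPsi (d : HedgeData) (ψ t s y : ℝ) : ℝ :=
  d.Vs t s + d.thetaTilde t s y * ψ

/-- The Hamiltonian `H^ψ(t,s,y;ϑ,ς)`. -/
noncomputable def HedgeData.Ham (d : HedgeData) (ψ t s y ϑ ς : ℝ) : ℝ :=
  1 / ψ * d.U1 y * d.f t s y ς
    + 1 / 2 * s ^ 2 * d.Vss t s * ((d.sb t s) ^ 2 - ς ^ 2) * d.wPsiY ψ t s y
    + 1 / 2 * ς ^ 2 * s ^ 2 *
      (d.wPsiSS ψ t s y + 2 * (ϑ - d.Vs t s) * d.wPsiSY ψ t s y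
        + (ϑ - d.Vs t s) ^ 2 * d.wPsiYY ψ t s y)

/-- The standing assumptions (Assumption 3.1 of the paper). -/
structure HedgeData.Assumptions (d : HedgeData) : Prop where
  hT : 0 < d.T
  hK : 1 < d.K
  heps : 0 < d.eps
  hy : d.yl < d.yu
  sb_mem : ∀ t ∈ Icc (0:ℝ) d.T, ∀ s ∈ Icc d.K⁻¹ d.K, d.sb t s ∈ Icc (0:ℝ) d.K
  sb_lb : ∀ t ∈ Icc (0:ℝ) d.T, ∀ s ∈ Ioo d.K⁻¹ d.K, d.eps ≤ d.sb t s
  sb_ub : ∀ t ∈ Icc (0:ℝ) d.T, ∀ s ∈ Ioo d.K⁻¹ d.K, d.sb t s ≤ d.K - d.eps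
  sb_bdry : ∀ t ∈ Icc (0:ℝ) d.T, d.sb t d.K⁻¹ = 0 ∧ d.sb t d.K = 0
  V_derivS : ∀ t ∈ Ioo (0:ℝ) d.T, ∀ s ∈ Ioo d.K⁻¹ d.K, HasDerivAt (d.V t) (d.Vs t s) s
  V_derivSS : ∀ t ∈ Ioo (0:ℝ) d.T, ∀ s ∈ Ioo d.K⁻¹ d.K, HasDerivAt (d.Vs t) (d.Vss t s) s
  Vss_cont : ∀ t ∈ Ioo (0:ℝ) d.T, ContinuousOn (d.Vss t) (Ioo d.K⁻¹ d.K)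
  Vss_bdd : ∀ t ∈ Ioo (0:ℝ) d.T, ∀ s ∈ Ioo d.K⁻¹ d.K, |s ^ 2 * d.Vss t s| ≤ d.K
  f_deriv1 : ∀ t s y ς : ℝ, HasDerivAt (d.f t s y) (d.f1 t s y ς) ς
  f_deriv2 : ∀ t s y ς : ℝ, HasDerivAt (d.f1 t s y) (d.f2 t s y ς) ς
  f_deriv3 : ∀ t s y ς : ℝ, HasDerivAt (d.f2 t s y) (d.f3 t s y ς) ς
  f_deriv4 : ∀ t s y ς : ℝ, HasDerivAt (d.f3 t s y) (d.f4 t s y ς) ς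
  f4_cont : ∀ t s y : ℝ, Continuous (d.f4 t s y)
  f_nonneg : ∀ t s y ς : ℝ, 0 ≤ ς → 0 ≤ d.f t s y ς
  f_min : ∀ t ∈ Ioo (0:ℝ) d.T, ∀ s ∈ Ioo d.K⁻¹ d.K, ∀ y ∈ Ioo d.yl d.yu,
    d.f t s y (d.sb t s) = 0 ∧ d.f1 t s y (d.sb t s) = 0
  f2_bdd : ∀ t ∈ Ioo (0:ℝ) d.T, ∀ s ∈ Ioo d.K⁻¹ d.K, ∀ y ∈ Ioo d.yl d.yu,
    ∀ ς ∈ Icc (0:ℝ) d.K, 1 / d.K ≤ d.f2 t s y ς ∧ d.f2 t s y ς ≤ d.K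
  f34_bdd : ∀ t ∈ Ioo (0:ℝ) d.T, ∀ s ∈ Ioo d.K⁻¹ d.K, ∀ y ∈ Ioo d.yl d.yu,
    ∀ ς ∈ Icc (0:ℝ) d.K, |d.f3 t s y ς| ≤ d.K ∧ |d.f4 t s y ς| ≤ d.K
  U_deriv1 : ∀ y : ℝ, HasDerivAt d.U (d.U1 y) y
  U_deriv2 : ∀ y : ℝ, HasDerivAt d.U1 (d.U2 y) y
  U_deriv3 : ∀ y : ℝ, HasDerivAt d.U2 (d.U3 y) y
  U3_cont : Continuous d.U3
  U1_pos : ∀ y : ℝ, 0 < d.U1 y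
  U2_neg : ∀ y : ℝ, d.U2 y < 0
  wt_cont : ContinuousOn (fun p : ℝ × ℝ × ℝ => d.wt p.1 p.2.1 p.2.2)
    (Icc 0 d.T ×ˢ Icc d.K⁻¹ d.K ×ˢ Icc d.yl d.yu)
  wh_cont : ContinuousOn (fun p : ℝ × ℝ × ℝ => d.wh p.1 p.2.1 p.2.2)
    (Icc 0 d.T ×ˢ Icc d.K⁻¹ d.K ×ˢ Icc d.yl d.yu)
  wt_deriv : ∀ t ∈ Ioo (0:ℝ) d.T, ∀ s ∈ Ioo d.K⁻¹ d.K, ∀ y ∈ Ioo d.yl d.yu,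
    HasDerivAt (fun t' => d.wt t' s y) (d.wtT t s y) t ∧
    HasDerivAt (fun s' => d.wt t s' y) (d.wtS t s y) s ∧
    HasDerivAt (fun y' => d.wt t s y') (d.wtY t s y) y ∧
    HasDerivAt (fun s' => d.wtS t s' y) (d.wtSS t s y) s ∧
    HasDerivAt (fun y' => d.wtS t s y') (d.wtSY t s y) y ∧
    HasDerivAt (fun y' => d.wtY t s y') (d.wtYY t s y) y
  wh_deriv : ∀ t ∈ Ioo (0:ℝ) d.T, ∀ s ∈ Ioo d.K⁻¹ d.K, ∀ y ∈ Ioo d.yl d.yu,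
    HasDerivAt (fun t' => d.wh t' s y) (d.whT t s y) t ∧
    HasDerivAt (fun s' => d.wh t s' y) (d.whS t s y) s ∧
    HasDerivAt (fun y' => d.wh t s y') (d.whY t s y) y ∧
    HasDerivAt (fun s' => d.whS t s' y) (d.whSS t s y) s ∧
    HasDerivAt (fun y' => d.whS t s y') (d.whSY t s y) y ∧
    HasDerivAt (fun y' => d.whY t s y') (d.whYY t s y) y
  wt_deriv_cont : ∀ g ∈ [d.wtT, d.wtS, d.wtY, d.wtSS, d.wtSY, d.wtYY],
    ContinuousOn (fun p : ℝ × ℝ × ℝ => g p.1 p.2.1 p.2.2)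
      (Ioo 0 d.T ×ˢ Ioo d.K⁻¹ d.K ×ˢ Ioo d.yl d.yu)
  wh_deriv_cont : ∀ g ∈ [d.whT, d.whS, d.whY, d.whSS, d.whSY, d.whYY],
    ContinuousOn (fun p : ℝ × ℝ × ℝ => g p.1 p.2.1 p.2.2)
      (Ioo 0 d.T ×ˢ Ioo d.K⁻¹ d.K ×ˢ Ioo d.yl d.yu)
  wt_bdd : ∀ g ∈ [d.wtT, d.wtS, d.wtY, d.wtSS, d.wtSY, d.wtYY],
    ∀ t ∈ Ioo (0:ℝ) d.T, ∀ s ∈ Ioo d.K⁻¹ d.K, ∀ y ∈ Ioo d.yl d.yu, |g t s y| ≤ d.K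
  wh_bdd : ∀ g ∈ [d.whT, d.whS, d.whY, d.whSS, d.whSY, d.whYY],
    ∀ t ∈ Ioo (0:ℝ) d.T, ∀ s ∈ Ioo d.K⁻¹ d.K, ∀ y ∈ Ioo d.yl d.yu, |g t s y| ≤ d.K

/-!
As a function of `ς`, the Hamiltonian is a positive multiple of `f(ς) - p ς² / 2` plus a constant,
where the tilt `p` does not depend on `ς` and satisfies `p = ψ s² V̄_ss + O(ψ²)` uniformly on the
domain. For small `ψ` the derivative `f'(ς) - p ς` is negative at `0` and positive at `K`, so the
minimum over `[0,K]` is attained at an interior critical point. Strong convexity of `f` puts each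
critical point within `O(ψ)` of `σ̄`, and expanding `f'(ς) = p ς` to first order around `σ̄` then
identifies it as `σ̄ + σ̄ s² V̄_ss ψ / f''(σ̄) + O(ψ²)`.
-/

section Calculus

theorem exists_mem_Ioo_isMinOn_of_deriv_endpoints {F : ℝ → ℝ} {a b F'a F'b : ℝ} (hab : a < b)
    (hF : ContinuousOn F (Icc a b)) (hFa : HasDerivWithinAt F F'a (Icc a b) a) (ha : F'a < 0)
    (hFb : HasDerivWithinAt F F'b (Icc a b) b) (hb : 0 < F'b) :
    ∃ x ∈ Ioo a b, IsMinOn F (Icc a b) x := by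
  obtain ⟨x, hx, hmin⟩ := isCompact_Icc.exists_isMinOn (nonempty_Icc.2 hab.le) hF
  have mul_deriv_nonneg : ∀ z ∈ Icc a b, ∀ F', HasDerivWithinAt F F' (Icc a b) x →
      0 ≤ (z - x) * F' := fun z hz F' hF' => by
    simpa using hmin.localize.hasFDerivWithinAt_nonneg hF'.hasFDerivWithinAt
      (sub_mem_posTangentConeAt_of_segment_subset ((convex_Icc a b).segment_subset hx hz))
  have hxa : x ≠ a := by
    rintro rfl
    exact (mul_deriv_nonneg b (right_mem_Icc.2 hab.le) _ hFa).not_gt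
      (mul_neg_of_pos_of_neg (sub_pos.2 hab) ha)
  have hxb : x ≠ b := by
    rintro rfl
    exact (mul_deriv_nonneg a (left_mem_Icc.2 hab.le) _ hFb).not_gt
      (mul_neg_of_neg_of_pos (sub_neg.2 hab) hb)
  exact ⟨x, ⟨hx.1.lt_of_ne' hxa, hx.2.lt_of_ne hxb⟩, hmin⟩

theorem norm_sub_sub_smul_le_of_lipschitzOnWith_deriv {𝕜 G : Type*} [RCLike 𝕜]
    [NormedAddCommGroup G] [NormedSpace 𝕜 G] {s : Set 𝕜} {g g' : 𝕜 → G} {C : NNReal} {a x : 𝕜}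
    (hs : Convex ℝ s) (hg : ∀ z ∈ s, HasDerivWithinAt g (g' z) s z)
    (hg' : LipschitzOnWith C g' s) (ha : a ∈ s) (hx : x ∈ s) :
    ‖g x - g a - (x - a) • g' a‖ ≤ C * ‖x - a‖ ^ 2 := by
  have hseg : segment ℝ a x ⊆ s := hs.segment_subset ha hx
  have hderiv : ∀ z ∈ segment ℝ a x,
      HasDerivWithinAt (fun z => g z - z • g' a) (g' z - g' a) (segment ℝ a x) z := fun z hz => by
    simpa using ((hg z (hseg hz)).mono hseg).fun_sub
      ((hasDerivWithinAt_id z _).smul_const (g' a))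
  have hbound : ∀ z ∈ segment ℝ a x, ‖g' z - g' a‖ ≤ C * ‖x - a‖ := fun z hz =>
    (hg'.norm_sub_le (hseg hz) ha).trans (by gcongr; exact norm_sub_le_of_mem_segment hz)
  have hmean := Convex.norm_image_sub_le_of_norm_hasDerivWithin_le hderiv hbound
    (convex_segment a x) (left_mem_segment ℝ a x) (right_mem_segment ℝ a x)
  calc ‖g x - g a - (x - a) • g' a‖ = ‖g x - x • g' a - (g a - a • g' a)‖ := by
        rw [sub_smul]; abel_nf
    _ ≤ C * ‖x - a‖ ^ 2 := by rwa [pow_two, ← mul_assoc]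

theorem mul_sub_le_sub_of_le_hasDerivWithinAt {s : Set ℝ} {g g' : ℝ → ℝ} {c x y : ℝ}
    (hs : Convex ℝ s) (hg : ∀ z ∈ s, HasDerivWithinAt g (g' z) s z) (hc : ∀ z ∈ s, c ≤ g' z)
    (hx : x ∈ s) (hy : y ∈ s) (hxy : x ≤ y) : c * (y - x) ≤ g y - g x := by
  have hderiv : ∀ z ∈ interior s, HasDerivAt g (g' z) z := fun z hz =>
    (hg z (interior_subset hz)).hasDerivAt (mem_interior_iff_mem_nhds.1 hz)
  exact hs.mul_sub_le_image_sub_of_le_deriv (fun z hz => (hg z hz).continuousWithinAt)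
    (fun z hz => (hderiv z hz).differentiableAt.differentiableWithinAt)
    (fun z hz => (hderiv z hz).deriv ▸ hc z (interior_subset hz)) x hx y hy hxy

theorem mul_abs_sub_le_abs_sub_of_le_hasDerivWithinAt {s : Set ℝ} {g g' : ℝ → ℝ} {c x y : ℝ}
    (hs : Convex ℝ s) (hg : ∀ z ∈ s, HasDerivWithinAt g (g' z) s z) (hc : ∀ z ∈ s, c ≤ g' z)
    (hx : x ∈ s) (hy : y ∈ s) : c * |y - x| ≤ |g y - g x| := by
  rcases le_total x y with hxy | hyx
  · rw [abs_of_nonneg (sub_nonneg.2 hxy)]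
    exact (mul_sub_le_sub_of_le_hasDerivWithinAt hs hg hc hx hy hxy).trans (le_abs_self _)
  · rw [abs_sub_comm, abs_of_nonneg (sub_nonneg.2 hyx), abs_sub_comm (g y)]
    exact (mul_sub_le_sub_of_le_hasDerivWithinAt hs hg hc hy hx hyx).trans (le_abs_self _)

theorem norm_mul_add_mul_sq_le {α β B ψ : ℝ} (hα : ‖α‖ ≤ B) (hβ : ‖β‖ ≤ B) (hψ : ψ ∈ Icc 0 1) :
    ‖α * ψ + β * ψ ^ 2‖ ≤ 2 * B * ψ := by
  have hψψ : ψ ^ 2 ≤ ψ := pow_le_of_le_one hψ.1 hψ.2 two_ne_zero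
  have hB : 0 ≤ B := (norm_nonneg α).trans hα
  calc ‖α * ψ + β * ψ ^ 2‖ ≤ B * ψ + B * ψ ^ 2 :=
        norm_add_le_of_le
          (norm_mul_le_of_le hα (Real.norm_of_nonneg hψ.1).le)
          (norm_mul_le_of_le hβ (Real.norm_of_nonneg (sq_nonneg ψ)).le)
    _ ≤ B * ψ + B * ψ := by gcongr
    _ = 2 * B * ψ := by ring

end Calculus

section QuadraticTilt

variable {f f' f'' : ℝ → ℝ} {b κ p x σ : ℝ}

theorem hasDerivWithinAt_sub_mul_sq_div_two {s : Set ℝ} {F' : ℝ}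
    (hf : HasDerivWithinAt f F' s x) :
    HasDerivWithinAt (fun z => f z - p * (z ^ 2 / 2)) (F' - p * x) s x := by
  simpa using hf.fun_sub ((((hasDerivWithinAt_id x s).fun_pow 2).div_const 2).const_mul p)

theorem exists_mem_Ioo_isMinOn_sub_mul_sq_div_two {ε : ℝ}
    (hf : ∀ z ∈ Icc 0 b, HasDerivWithinAt f (f' z) (Icc 0 b) z)
    (hf' : ∀ z ∈ Icc 0 b, HasDerivWithinAt f' (f'' z) (Icc 0 b) z)
    (hκ : 0 < κ) (hconv : ∀ z ∈ Icc 0 b, κ ≤ f'' z)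
    (hε : 0 < ε) (hσ : σ ∈ Icc ε (b - ε)) (hσ0 : f' σ = 0) (hp : p * b < κ * ε) :
    ∃ x ∈ Ioo 0 b, IsMinOn (fun z => f z - p * (z ^ 2 / 2)) (Icc 0 b) x ∧
      HasDerivAt (fun z => f z - p * (z ^ 2 / 2)) 0 x ∧ f' x = p * x := by
  have hb : 0 < b := by linarith [hσ.1, hσ.2]
  have hσb : σ ∈ Icc 0 b := ⟨hε.le.trans hσ.1, by linarith [hσ.2]⟩
  have hF : ∀ z ∈ Icc 0 b, HasDerivWithinAt (fun z => f z - p * (z ^ 2 / 2))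
      (f' z - p * z) (Icc 0 b) z := fun z hz =>
    hasDerivWithinAt_sub_mul_sq_div_two (hf z hz)
  have hzero : f' 0 - p * 0 < 0 := by
    have := mul_sub_le_sub_of_le_hasDerivWithinAt (convex_Icc 0 b) hf' hconv
      (left_mem_Icc.2 hb.le) hσb hσb.1
    nlinarith [mul_pos hκ hε, hσ.1]
  have hright : 0 < f' b - p * b := by
    have := mul_sub_le_sub_of_le_hasDerivWithinAt (convex_Icc 0 b) hf' hconv
      hσb (right_mem_Icc.2 hb.le) hσb.2
    nlinarith [hσ.2]
  obtain ⟨x, hx, hmin⟩ := exists_mem_Ioo_isMinOn_of_deriv_endpoints hb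
    (fun z hz => (hF z hz).continuousWithinAt) (hF 0 (left_mem_Icc.2 hb.le)) hzero
    (hF b (right_mem_Icc.2 hb.le)) hright
  have hnhds : Icc 0 b ∈ nhds x := Icc_mem_nhds hx.1 hx.2
  have hderiv := (hF x (Ioo_subset_Icc_self hx)).hasDerivAt hnhds
  have hcrit : f' x - p * x = 0 := (hmin.isLocalMin hnhds).hasDerivAt_eq_zero hderiv
  exact ⟨x, hx, hmin, hcrit ▸ hderiv, sub_eq_zero.1 hcrit⟩

theorem abs_sub_le_of_deriv_eq_mul
    (hf' : ∀ z ∈ Icc 0 b, HasDerivWithinAt f' (f'' z) (Icc 0 b) z)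
    (hκ : 0 < κ) (hconv : ∀ z ∈ Icc 0 b, κ ≤ f'' z)
    (hσ : σ ∈ Icc 0 b) (hσ0 : f' σ = 0) (hx : x ∈ Icc 0 b) (hcrit : f' x = p * x) :
    |x - σ| ≤ |p| * b / κ := by
  rw [le_div_iff₀' hκ]
  calc κ * |x - σ| ≤ |f' x - f' σ| :=
        mul_abs_sub_le_abs_sub_of_le_hasDerivWithinAt (convex_Icc 0 b) hf' hconv hσ hx
    _ = |p| * x := by rw [hσ0, sub_zero, hcrit, abs_mul, abs_of_nonneg hx.1]
    _ ≤ |p| * b := by gcongr; exact hx.2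

theorem abs_sub_first_order_le_of_deriv_eq_mul {Λ : NNReal}
    (hf' : ∀ z ∈ Icc 0 b, HasDerivWithinAt f' (f'' z) (Icc 0 b) z)
    (hκ : 0 < κ) (hconv : ∀ z ∈ Icc 0 b, κ ≤ f'' z) (hLip : LipschitzOnWith Λ f'' (Icc 0 b))
    (hσ : σ ∈ Icc 0 b) (hσ0 : f' σ = 0) (hx : x ∈ Icc 0 b) (hcrit : f' x = p * x) (q : ℝ) :
    |x - (σ + σ * q / f'' σ)| ≤ ((b / κ + Λ * (b / κ) ^ 2) * p ^ 2 + b * |p - q|) / κ := by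
  have hfσ : 0 < f'' σ := hκ.trans_le (hconv σ hσ)
  have hdist := abs_sub_le_of_deriv_eq_mul hf' hκ hconv hσ hσ0 hx hcrit
  have htaylor : |p * x - (x - σ) * f'' σ| ≤ Λ * |x - σ| ^ 2 := by
    simpa [hσ0, hcrit] using
      norm_sub_sub_smul_le_of_lipschitzOnWith_deriv (convex_Icc 0 b) hf' hLip hσ hx
  have herror : f'' σ * (x - (σ + σ * q / f'' σ)) =
      p * (x - σ) + σ * (p - q) - (p * x - (x - σ) * f'' σ) := by
    field_simp; ring
  rw [le_div_iff₀' hκ]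
  calc κ * |x - (σ + σ * q / f'' σ)| ≤ |f'' σ * (x - (σ + σ * q / f'' σ))| := by
        rw [abs_mul, abs_of_pos hfσ]; gcongr; exact hconv σ hσ
    _ ≤ |p| * |x - σ| + σ * |p - q| + Λ * |x - σ| ^ 2 := by
        rw [herror]
        refine (abs_sub _ _).trans (add_le_add ((abs_add_le _ _).trans ?_) htaylor)
        rw [abs_mul, abs_mul, abs_of_nonneg hσ.1]
    _ ≤ |p| * (|p| * b / κ) + b * |p - q| + Λ * (|p| * b / κ) ^ 2 := by
        gcongr; exact hσ.2
    _ = (b / κ + Λ * (b / κ) ^ 2) * p ^ 2 + b * |p - q| := by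
        rw [← sq_abs p]; ring

end QuadraticTilt

namespace HedgeData

/-- The coefficient `p` for which `ς ↦ H^ψ(t,s,y;ϑ,ς)` is, up to a positive factor and an additive
constant, the quadratically tilted penalty `f(ς) - p ς² / 2`. -/
noncomputable def tilt (d : HedgeData) (ψ t s y ϑ : ℝ) : ℝ :=
  ψ * (d.U1 y)⁻¹ * (s ^ 2 * d.Vss t s * d.wPsiY ψ t s y
    - s ^ 2 * (d.wPsiSS ψ t s y + 2 * (ϑ - d.Vs t s) * d.wPsiSY ψ t s y
      + (ϑ - d.Vs t s) ^ 2 * d.wPsiYY ψ t s y))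

theorem Ham_eq_tilted_penalty (d : HedgeData) {ψ t s y : ℝ} (ϑ : ℝ) (hψ : ψ ≠ 0)
    (hU : d.U1 y ≠ 0) :
    d.Ham ψ t s y ϑ = fun ς =>
      d.U1 y / ψ * (d.f t s y ς - d.tilt ψ t s y ϑ * (ς ^ 2 / 2))
        + 1 / 2 * s ^ 2 * d.Vss t s * d.sb t s ^ 2 * d.wPsiY ψ t s y := by
  funext ς
  unfold Ham tilt
  field_simp
  ring

/-- Every coefficient entering the Hamiltonian at `(t,s,y)` is at most `m` in absolute value. -/
structure BoundedAt (d : HedgeData) (m t s y : ℝ) : Prop where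
  spot : ‖s‖ ≤ m
  gamma : ‖s ^ 2 * d.Vss t s‖ ≤ m
  U1 : ‖d.U1 y‖ ≤ m
  U1_inv : ‖(d.U1 y)⁻¹‖ ≤ m
  U2 : ‖d.U2 y‖ ≤ m
  U3 : ‖d.U3 y‖ ≤ m
  wt : ‖d.wt t s y‖ ≤ m
  wt_deriv : ∀ g ∈ [d.wtS, d.wtY, d.wtSS, d.wtSY, d.wtYY], ‖g t s y‖ ≤ m
  wh : ‖d.wh t s y‖ ≤ m
  wh_deriv : ∀ g ∈ [d.whS, d.whY, d.whSS, d.whSY, d.whYY], ‖g t s y‖ ≤ m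

namespace BoundedAt

variable {d : HedgeData} {m t s y ψ : ℝ}

theorem norm_wPsiSS_le (h : d.BoundedAt m t s y) (hψ : ψ ∈ Icc 0 1) :
    ‖d.wPsiSS ψ t s y‖ ≤ 2 * (m * m) * ψ :=
  norm_mul_add_mul_sq_le
    ((norm_neg _).trans_le (norm_mul_le_of_le h.U1 (h.wt_deriv _ (by simp))))
    (norm_mul_le_of_le h.U1 (h.wh_deriv _ (by simp))) hψ

theorem norm_wPsiSY_le (h : d.BoundedAt m t s y) (hψ : ψ ∈ Icc 0 1) :
    ‖d.wPsiSY ψ t s y‖ ≤ 2 * (m * m + m * m) * ψ :=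
  norm_mul_add_mul_sq_le
    ((norm_neg _).trans_le (norm_add_le_of_le (norm_mul_le_of_le h.U2 (h.wt_deriv _ (by simp)))
      (norm_mul_le_of_le h.U1 (h.wt_deriv _ (by simp)))))
    (norm_add_le_of_le (norm_mul_le_of_le h.U2 (h.wh_deriv _ (by simp)))
      (norm_mul_le_of_le h.U1 (h.wh_deriv _ (by simp)))) hψ

theorem norm_wPsiY_sub_le (h : d.BoundedAt m t s y) (hψ : ψ ∈ Icc 0 1) :
    ‖d.wPsiY ψ t s y - d.U1 y‖ ≤ 2 * (m * m + m * m) * ψ := by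
  rw [show d.wPsiY ψ t s y - d.U1 y = -(d.U2 y * d.wt t s y + d.U1 y * d.wtY t s y) * ψ
    + (d.U2 y * d.wh t s y + d.U1 y * d.whY t s y) * ψ ^ 2 by unfold wPsiY; ring]
  exact norm_mul_add_mul_sq_le
    ((norm_neg _).trans_le (norm_add_le_of_le (norm_mul_le_of_le h.U2 h.wt)
      (norm_mul_le_of_le h.U1 (h.wt_deriv _ (by simp)))))
    (norm_add_le_of_le (norm_mul_le_of_le h.U2 h.wh)
      (norm_mul_le_of_le h.U1 (h.wh_deriv _ (by simp)))) hψ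

theorem norm_wPsiYY_sub_le (h : d.BoundedAt m t s y) (hψ : ψ ∈ Icc 0 1) :
    ‖d.wPsiYY ψ t s y - d.U2 y‖ ≤ 2 * (m * m + 2 * m * m + m * m) * ψ := by
  have h2U2 : ‖2 * d.U2 y‖ ≤ 2 * m := norm_mul_le_of_le (RCLike.norm_ofNat 2).le h.U2
  rw [show d.wPsiYY ψ t s y - d.U2 y =
    -(d.U3 y * d.wt t s y + 2 * d.U2 y * d.wtY t s y + d.U1 y * d.wtYY t s y) * ψ
    + (d.U3 y * d.wh t s y + 2 * d.U2 y * d.whY t s y + d.U1 y * d.whYY t s y) * ψ ^ 2 by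
      unfold wPsiYY; ring]
  exact norm_mul_add_mul_sq_le
    ((norm_neg _).trans_le (norm_add_le_of_le (norm_add_le_of_le (norm_mul_le_of_le h.U3 h.wt)
      (norm_mul_le_of_le h2U2 (h.wt_deriv _ (by simp))))
      (norm_mul_le_of_le h.U1 (h.wt_deriv _ (by simp)))))
    (norm_add_le_of_le (norm_add_le_of_le (norm_mul_le_of_le h.U3 h.wh)
      (norm_mul_le_of_le h2U2 (h.wh_deriv _ (by simp))))
      (norm_mul_le_of_le h.U1 (h.wh_deriv _ (by simp)))) hψ

theorem norm_wPsiYY_le (h : d.BoundedAt m t s y) (hψ : ψ ∈ Icc 0 1) :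
    ‖d.wPsiYY ψ t s y‖ ≤ m + 8 * m ^ 2 :=
  calc ‖d.wPsiYY ψ t s y‖ ≤ m + 2 * (m * m + 2 * m * m + m * m) * ψ :=
        (norm_le_norm_add_norm_sub' _ _).trans (add_le_add h.U2 (h.norm_wPsiYY_sub_le hψ))
    _ ≤ m + 8 * m ^ 2 := by nlinarith [hψ.2, sq_nonneg m]

theorem norm_second_order_term_le (h : d.BoundedAt m t s y) (hψ : ψ ∈ Icc 0 1) {ϑ : ℝ}
    (hϑ : ‖ϑ‖ ≤ m) :
    ‖d.wPsiSS ψ t s y + 2 * (ϑ * ψ) * d.wPsiSY ψ t s y + (ϑ * ψ) ^ 2 * d.wPsiYY ψ t s y‖ ≤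
      (2 * m ^ 2 + 9 * m ^ 3 + 8 * m ^ 4) * ψ := by
  have hm : 0 ≤ m := (norm_nonneg _).trans hϑ
  have hϑψ : ‖ϑ * ψ‖ ≤ m * ψ := norm_mul_le_of_le hϑ (Real.norm_of_nonneg hψ.1).le
  have hψψ : ψ ^ 2 ≤ ψ := pow_le_of_le_one hψ.1 hψ.2 two_ne_zero
  calc _ ≤ 2 * (m * m) * ψ + 2 * (m * ψ) * (2 * (m * m + m * m) * ψ)
          + (m * ψ) ^ 2 * (m + 8 * m ^ 2) :=
        norm_add_le_of_le
          (norm_add_le_of_le (h.norm_wPsiSS_le hψ)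
            (norm_mul_le_of_le (norm_mul_le_of_le (RCLike.norm_ofNat 2).le hϑψ)
              (h.norm_wPsiSY_le hψ)))
          (norm_mul_le_of_le ((norm_pow _ 2).trans_le (pow_le_pow_left₀ (norm_nonneg _) hϑψ 2))
            (h.norm_wPsiYY_le hψ))
    _ = 2 * m ^ 2 * ψ + (9 * m ^ 3 + 8 * m ^ 4) * ψ ^ 2 := by ring
    _ ≤ 2 * m ^ 2 * ψ + (9 * m ^ 3 + 8 * m ^ 4) * ψ := by gcongr
    _ = (2 * m ^ 2 + 9 * m ^ 3 + 8 * m ^ 4) * ψ := by ring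

theorem norm_tilt_sub_le (h : d.BoundedAt m t s y) (hU : d.U1 y ≠ 0) (hψ : ψ ∈ Icc 0 1) {ϑ : ℝ}
    (hϑ : ‖ϑ‖ ≤ m) :
    ‖d.tilt ψ t s y (d.Vs t s + ϑ * ψ) - ψ * (s ^ 2 * d.Vss t s)‖ ≤
      m ^ 4 * (4 + 2 * m + 9 * m ^ 2 + 8 * m ^ 3) * ψ ^ 2 := by
  have hsplit : d.tilt ψ t s y (d.Vs t s + ϑ * ψ) - ψ * (s ^ 2 * d.Vss t s) =
      ψ * (d.U1 y)⁻¹ * (s ^ 2 * d.Vss t s * (d.wPsiY ψ t s y - d.U1 y)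
        - s ^ 2 * (d.wPsiSS ψ t s y + 2 * (ϑ * ψ) * d.wPsiSY ψ t s y
          + (ϑ * ψ) ^ 2 * d.wPsiYY ψ t s y)) := by
    unfold tilt
    field_simp
    ring
  rw [hsplit]
  calc _ ≤ ψ * m * (m * (2 * (m * m + m * m) * ψ)
          + m ^ 2 * ((2 * m ^ 2 + 9 * m ^ 3 + 8 * m ^ 4) * ψ)) :=
        norm_mul_le_of_le (norm_mul_le_of_le (Real.norm_of_nonneg hψ.1).le h.U1_inv)
          (norm_sub_le_of_le (norm_mul_le_of_le h.gamma (h.norm_wPsiY_sub_le hψ))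
            (norm_mul_le_of_le
              ((norm_pow s 2).trans_le (pow_le_pow_left₀ (norm_nonneg s) h.spot 2))
              (h.norm_second_order_term_le hψ hϑ)))
    _ = m ^ 4 * (4 + 2 * m + 9 * m ^ 2 + 8 * m ^ 3) * ψ ^ 2 := by ring

end BoundedAt

/-- Standing assumptions on the hedging data in the variables `s`, `y` and `ς` only: an increasing
`C³` utility, a penalty that is strongly convex in `ς` with bounded third derivative and critical
at `σ̄`, and corrections `w̃`, `ŵ` that are bounded together with their space derivatives. As
in `Assumptions`, the `ς`-derivatives of `f` and the partial derivatives of `w̃`, `ŵ` are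
separate fields of the data, tied to the functions by `HasDerivWithinAt` and `HasDerivAt`. -/
structure SpatialAssumptions (d : HedgeData) : Prop where
  K_pos : 0 < d.K
  eps_pos : 0 < d.eps
  sb_mem : ∀ t ∈ Ioo 0 d.T, ∀ s ∈ Ioo d.K⁻¹ d.K, d.sb t s ∈ Icc d.eps (d.K - d.eps)
  V_derivS : ∀ t ∈ Ioo 0 d.T, ∀ s ∈ Ioo d.K⁻¹ d.K, HasDerivAt (d.V t) (d.Vs t s) s
  V_derivSS : ∀ t ∈ Ioo 0 d.T, ∀ s ∈ Ioo d.K⁻¹ d.K, HasDerivAt (d.Vs t) (d.Vss t s) s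
  Vss_bdd : ∀ t ∈ Ioo 0 d.T, ∀ s ∈ Ioo d.K⁻¹ d.K, |s ^ 2 * d.Vss t s| ≤ d.K
  f_deriv : ∀ t ∈ Ioo 0 d.T, ∀ s ∈ Ioo d.K⁻¹ d.K, ∀ y ∈ Ioo d.yl d.yu, ∀ ς ∈ Icc 0 d.K,
    HasDerivWithinAt (d.f t s y) (d.f1 t s y ς) (Icc 0 d.K) ς ∧
    HasDerivWithinAt (d.f1 t s y) (d.f2 t s y ς) (Icc 0 d.K) ς ∧
    HasDerivWithinAt (d.f2 t s y) (d.f3 t s y ς) (Icc 0 d.K) ς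
  f1_sb : ∀ t ∈ Ioo 0 d.T, ∀ s ∈ Ioo d.K⁻¹ d.K, ∀ y ∈ Ioo d.yl d.yu, d.f1 t s y (d.sb t s) = 0
  f2_lb : ∀ t ∈ Ioo 0 d.T, ∀ s ∈ Ioo d.K⁻¹ d.K, ∀ y ∈ Ioo d.yl d.yu, ∀ ς ∈ Icc 0 d.K,
    d.K⁻¹ ≤ d.f2 t s y ς
  f3_bdd : ∀ t ∈ Ioo 0 d.T, ∀ s ∈ Ioo d.K⁻¹ d.K, ∀ y ∈ Ioo d.yl d.yu, ∀ ς ∈ Icc 0 d.K,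
    |d.f3 t s y ς| ≤ d.K
  U_deriv1 : ∀ y, HasDerivAt d.U (d.U1 y) y
  U_deriv2 : ∀ y, HasDerivAt d.U1 (d.U2 y) y
  U_deriv3 : ∀ y, HasDerivAt d.U2 (d.U3 y) y
  U3_cont : Continuous d.U3
  U1_pos : ∀ y, 0 < d.U1 y
  w_bdd : ∃ B, ∀ t ∈ Ioo 0 d.T, ∀ s ∈ Ioo d.K⁻¹ d.K, ∀ y ∈ Ioo d.yl d.yu,
    |d.wt t s y| ≤ B ∧ |d.wh t s y| ≤ B
  wt_deriv : ∀ t ∈ Ioo 0 d.T, ∀ s ∈ Ioo d.K⁻¹ d.K, ∀ y ∈ Ioo d.yl d.yu,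
    HasDerivAt (fun s' => d.wt t s' y) (d.wtS t s y) s ∧
    HasDerivAt (fun y' => d.wt t s y') (d.wtY t s y) y ∧
    HasDerivAt (fun s' => d.wtS t s' y) (d.wtSS t s y) s ∧
    HasDerivAt (fun y' => d.wtS t s y') (d.wtSY t s y) y ∧
    HasDerivAt (fun y' => d.wtY t s y') (d.wtYY t s y) y
  wh_deriv : ∀ t ∈ Ioo 0 d.T, ∀ s ∈ Ioo d.K⁻¹ d.K, ∀ y ∈ Ioo d.yl d.yu,
    HasDerivAt (fun s' => d.wh t s' y) (d.whS t s y) s ∧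
    HasDerivAt (fun y' => d.wh t s y') (d.whY t s y) y ∧
    HasDerivAt (fun s' => d.whS t s' y) (d.whSS t s y) s ∧
    HasDerivAt (fun y' => d.whS t s y') (d.whSY t s y) y ∧
    HasDerivAt (fun y' => d.whY t s y') (d.whYY t s y) y
  wt_deriv_bdd : ∀ g ∈ [d.wtS, d.wtY, d.wtSS, d.wtSY, d.wtYY],
    ∀ t ∈ Ioo 0 d.T, ∀ s ∈ Ioo d.K⁻¹ d.K, ∀ y ∈ Ioo d.yl d.yu, |g t s y| ≤ d.K
  wh_deriv_bdd : ∀ g ∈ [d.whS, d.whY, d.whSS, d.whSY, d.whYY],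
    ∀ t ∈ Ioo 0 d.T, ∀ s ∈ Ioo d.K⁻¹ d.K, ∀ y ∈ Ioo d.yl d.yu, |g t s y| ≤ d.K

variable {d : HedgeData}

theorem Assumptions.exists_abs_w_le (hd : d.Assumptions) :
    ∃ B, ∀ t ∈ Ioo 0 d.T, ∀ s ∈ Ioo d.K⁻¹ d.K, ∀ y ∈ Ioo d.yl d.yu,
      |d.wt t s y| ≤ B ∧ |d.wh t s y| ≤ B := by
  have hcompact : IsCompact (Icc 0 d.T ×ˢ Icc d.K⁻¹ d.K ×ˢ Icc d.yl d.yu) :=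
    isCompact_Icc.prod (isCompact_Icc.prod isCompact_Icc)
  obtain ⟨B, hB⟩ := hcompact.exists_bound_of_continuousOn (hd.wt_cont.prodMk hd.wh_cont)
  exact ⟨B, fun t ht s hs y hy => norm_prod_le_iff.1 <| hB (t, s, y)
    ⟨Ioo_subset_Icc_self ht, Ioo_subset_Icc_self hs, Ioo_subset_Icc_self hy⟩⟩

theorem Assumptions.spatialAssumptions (hd : d.Assumptions) : d.SpatialAssumptions where
  K_pos := one_pos.trans hd.hK
  eps_pos := hd.heps
  sb_mem t ht s hs :=
    ⟨hd.sb_lb t (Ioo_subset_Icc_self ht) s hs, hd.sb_ub t (Ioo_subset_Icc_self ht) s hs⟩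
  V_derivS := hd.V_derivS
  V_derivSS := hd.V_derivSS
  Vss_bdd := hd.Vss_bdd
  f_deriv t _ s _ y _ ς _ := ⟨(hd.f_deriv1 t s y ς).hasDerivWithinAt,
    (hd.f_deriv2 t s y ς).hasDerivWithinAt, (hd.f_deriv3 t s y ς).hasDerivWithinAt⟩
  f1_sb t ht s hs y hy := (hd.f_min t ht s hs y hy).2
  f2_lb t ht s hs y hy ς hς := (one_div d.K).symm.trans_le (hd.f2_bdd t ht s hs y hy ς hς).1
  f3_bdd t ht s hs y hy ς hς := (hd.f34_bdd t ht s hs y hy ς hς).1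
  U_deriv1 := hd.U_deriv1
  U_deriv2 := hd.U_deriv2
  U_deriv3 := hd.U_deriv3
  U3_cont := hd.U3_cont
  U1_pos := hd.U1_pos
  w_bdd := hd.exists_abs_w_le
  wt_deriv t ht s hs y hy := (hd.wt_deriv t ht s hs y hy).2
  wh_deriv t ht s hs y hy := (hd.wh_deriv t ht s hs y hy).2
  wt_deriv_bdd g hg := hd.wt_bdd g (List.mem_cons_of_mem _ hg)
  wh_deriv_bdd g hg := hd.wh_bdd g (List.mem_cons_of_mem _ hg)

namespace SpatialAssumptions

theorem eventually_boundedAt (hd : d.SpatialAssumptions) :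
    ∀ᶠ m in Filter.atTop, ∀ t ∈ Ioo 0 d.T, ∀ s ∈ Ioo d.K⁻¹ d.K, ∀ y ∈ Ioo d.yl d.yu,
      d.BoundedAt m t s y := by
  have eventually_norm_le : ∀ g : ℝ → ℝ, Continuous g →
      ∀ᶠ m in Filter.atTop, ∀ y ∈ Icc d.yl d.yu, ‖g y‖ ≤ m := fun g hg => by
    obtain ⟨B, hB⟩ := isCompact_Icc.exists_bound_of_continuousOn hg.continuousOn
    exact (Filter.eventually_ge_atTop B).mono fun m hm y hy => (hB y hy).trans hm
  have hU1 : Continuous d.U1 :=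
    continuous_iff_continuousAt.2 fun y => (hd.U_deriv2 y).continuousAt
  have hU2 : Continuous d.U2 :=
    continuous_iff_continuousAt.2 fun y => (hd.U_deriv3 y).continuousAt
  obtain ⟨B, hB⟩ := hd.w_bdd
  filter_upwards [eventually_norm_le _ hU1,
    eventually_norm_le _ (hU1.inv₀ fun y => (hd.U1_pos y).ne'), eventually_norm_le _ hU2,
    eventually_norm_le _ hd.U3_cont, Filter.eventually_ge_atTop d.K,
    Filter.eventually_ge_atTop B] with m hmU1 hmU1_inv hmU2 hmU3 hmK hmB t ht s hs y hy
  have hs0 : 0 < s := (inv_pos.2 hd.K_pos).trans hs.1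
  have hyI : y ∈ Icc d.yl d.yu := Ioo_subset_Icc_self hy
  exact {
    spot := (Real.norm_of_nonneg hs0.le).trans_le (hs.2.le.trans hmK)
    gamma := (hd.Vss_bdd t ht s hs).trans hmK
    U1 := hmU1 y hyI
    U1_inv := hmU1_inv y hyI
    U2 := hmU2 y hyI
    U3 := hmU3 y hyI
    wt := (hB t ht s hs y hy).1.trans hmB
    wt_deriv := fun g hg => (hd.wt_deriv_bdd g hg t ht s hs y hy).trans hmK
    wh := (hB t ht s hs y hy).2.trans hmB
    wh_deriv := fun g hg => (hd.wh_deriv_bdd g hg t ht s hs y hy).trans hmK }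

theorem exists_abs_tilt_sub_le (hd : d.SpatialAssumptions) (L : ℝ) :
    ∃ M > 0, ∀ t ∈ Ioo 0 d.T, ∀ s ∈ Ioo d.K⁻¹ d.K, ∀ y ∈ Ioo d.yl d.yu,
      ∀ ϑ ∈ Icc (-L) L, ∀ ψ ∈ Icc (0 : ℝ) 1,
        |d.tilt ψ t s y (d.Vs t s + ϑ * ψ) - ψ * (s ^ 2 * d.Vss t s)| ≤ M * ψ ^ 2 := by
  obtain ⟨m, hm, hmL, hm0⟩ := (hd.eventually_boundedAt.and
    ((Filter.eventually_ge_atTop L).and (Filter.eventually_gt_atTop 0))).exists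
  exact ⟨m ^ 4 * (4 + 2 * m + 9 * m ^ 2 + 8 * m ^ 3), by positivity,
    fun t ht s hs y hy ϑ hϑ ψ hψ =>
      (hm t ht s hs y hy).norm_tilt_sub_le (hd.U1_pos y).ne' hψ ((abs_le.2 hϑ).trans hmL)⟩

theorem lipschitzOnWith_f2 (hd : d.SpatialAssumptions) {t s y : ℝ} (ht : t ∈ Ioo 0 d.T)
    (hs : s ∈ Ioo d.K⁻¹ d.K) (hy : y ∈ Ioo d.yl d.yu) :
    LipschitzOnWith d.K.toNNReal (d.f2 t s y) (Icc 0 d.K) :=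
  (convex_Icc 0 d.K).lipschitzOnWith_of_nnnorm_hasDerivWithin_le
    (fun ς hς => (hd.f_deriv t ht s hs y hy ς hς).2.2) fun ς hς => by
      rw [← NNReal.coe_le_coe, coe_nnnorm, Real.coe_toNNReal _ hd.K_pos.le]
      exact hd.f3_bdd t ht s hs y hy ς hς

theorem exists_isMinOn_Ham (hd : d.SpatialAssumptions) {t s y ψ ϑ : ℝ} (ht : t ∈ Ioo 0 d.T)
    (hs : s ∈ Ioo d.K⁻¹ d.K) (hy : y ∈ Ioo d.yl d.yu) (hψ : 0 < ψ)
    (hp : d.tilt ψ t s y ϑ * d.K < d.K⁻¹ * d.eps) :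
    ∃ ςs ∈ Ioo 0 d.K, IsMinOn (d.Ham ψ t s y ϑ) (Icc 0 d.K) ςs ∧
      HasDerivAt (d.Ham ψ t s y ϑ) 0 ςs ∧
      |ςs - d.sigmaPsi ψ t s y| ≤ ((d.K ^ 2 + d.K ^ 5) * d.tilt ψ t s y ϑ ^ 2
        + d.K * |d.tilt ψ t s y ϑ - ψ * (s ^ 2 * d.Vss t s)|) * d.K := by
  have hf : ∀ ς ∈ Icc 0 d.K, _ := hd.f_deriv t ht s hs y hy
  have hσ : d.sb t s ∈ Icc d.eps (d.K - d.eps) := hd.sb_mem t ht s hs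
  have hσK : d.sb t s ∈ Icc 0 d.K :=
    Icc_subset_Icc hd.eps_pos.le (sub_le_self _ hd.eps_pos.le) hσ
  have hσ0 := hd.f1_sb t ht s hs y hy
  have hconv := hd.f2_lb t ht s hs y hy
  have hK : 0 < d.K⁻¹ := inv_pos.2 hd.K_pos
  obtain ⟨x, hx, hmin, hderiv, hcrit⟩ := exists_mem_Ioo_isMinOn_sub_mul_sq_div_two
    (fun ς hς => (hf ς hς).1) (fun ς hς => (hf ς hς).2.1) hK hconv hd.eps_pos hσ hσ0 hp
  have hest := abs_sub_first_order_le_of_deriv_eq_mul (fun ς hς => (hf ς hς).2.1) hK hconv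
    (hd.lipschitzOnWith_f2 ht hs hy) hσK hσ0 (Ioo_subset_Icc_self hx) hcrit
    (ψ * (s ^ 2 * d.Vss t s))
  have hU := hd.U1_pos y
  rw [d.Ham_eq_tilted_penalty ϑ hψ.ne' hU.ne']
  refine ⟨x, hx, ?_, ?_, ?_⟩
  · have hmono : Monotone fun v => d.U1 y / ψ * v
        + 1 / 2 * s ^ 2 * d.Vss t s * d.sb t s ^ 2 * d.wPsiY ψ t s y := fun u v huv => by
      dsimp only; gcongr
    exact hmin.comp_mono hmono
  · have hscaled := hderiv.const_mul (d.U1 y / ψ)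
    rw [mul_zero] at hscaled
    exact hscaled.add_const _
  · convert hest using 2
    · unfold sigmaPsi sigmaTilde
      ring_nf
    · rw [Real.coe_toNNReal _ hd.K_pos.le]
      have := hd.K_pos.ne'
      field_simp

end SpatialAssumptions

end HedgeData

theorem optimal_volatility_general (d : HedgeData) (hd : d.SpatialAssumptions) (L : ℝ) :
    ∃ C₁ > (0:ℝ), ∃ ψ₁ > (0:ℝ),
      ∀ t ∈ Ioo (0:ℝ) d.T, ∀ s ∈ Ioo d.K⁻¹ d.K, ∀ y ∈ Ioo d.yl d.yu,
        ∀ ϑ ∈ Icc (-L) L, ∀ ψ ∈ Ioo (0:ℝ) ψ₁,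
          ∃ ςs ∈ Ioo (0:ℝ) d.K,
            IsMinOn (fun ς => d.Ham ψ t s y (d.Vs t s + ϑ * ψ) ς) (Icc (0:ℝ) d.K) ςs ∧
            HasDerivAt (fun ς => d.Ham ψ t s y (d.Vs t s + ϑ * ψ) ς) 0 ςs ∧
            |ςs - d.sigmaPsi ψ t s y| ≤ C₁ * ψ ^ 2 := by
  have hK := hd.K_pos
  have hε := hd.eps_pos
  obtain ⟨M, hM, htilt⟩ := hd.exists_abs_tilt_sub_le L
  refine ⟨((d.K ^ 2 + d.K ^ 5) * (d.K + M) ^ 2 + d.K * M) * d.K, by positivity,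
    min 1 (d.K⁻¹ * d.eps / ((d.K + M) * d.K)), by positivity, ?_⟩
  intro t ht s hs y hy ϑ hϑ ψ ⟨hψ, hψ₁⟩
  obtain ⟨hψ1, hψε⟩ := lt_min_iff.1 hψ₁
  have hdiff := htilt t ht s hs y hy ϑ hϑ ψ ⟨hψ.le, hψ1.le⟩
  set p := d.tilt ψ t s y (d.Vs t s + ϑ * ψ)
  have hp : |p| ≤ (d.K + M) * ψ := by
    have hmain : |ψ * (s ^ 2 * d.Vss t s)| ≤ ψ * d.K := by
      rw [abs_mul, abs_of_pos hψ]; gcongr; exact hd.Vss_bdd t ht s hs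
    nlinarith [abs_sub_abs_le_abs_sub p (ψ * (s ^ 2 * d.Vss t s)), mul_pos hM hψ]
  have hsmall : p * d.K < d.K⁻¹ * d.eps := by
    rw [lt_div_iff₀ (by positivity)] at hψε
    nlinarith [le_abs_self p]
  obtain ⟨ςs, hςs, hmin, hderiv, hest⟩ := hd.exists_isMinOn_Ham ht hs hy hψ hsmall
  refine ⟨ςs, hςs, hmin, hderiv, hest.trans ?_⟩
  calc ((d.K ^ 2 + d.K ^ 5) * p ^ 2 + d.K * |p - ψ * (s ^ 2 * d.Vss t s)|) * d.K
      ≤ ((d.K ^ 2 + d.K ^ 5) * ((d.K + M) * ψ) ^ 2 + d.K * (M * ψ ^ 2)) * d.K := by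
        rw [← sq_abs p]; gcongr
    _ = _ := by ring

/-- **Existence and characterisation of the worst-case volatility.**
For every `L > 0` there are `C₁ > 0` and `ψ₁ > 0` such that for every `(t,s,y) ∈ D`,
every `ϑ̃ ∈ [-L,L]` and every `ψ ∈ (0,ψ₁)`, the function
`ς ↦ H^ψ(t,s,y; V̄_s(t,s) + ϑ̃ψ, ς)` attains its minimum over `[0,K]` at a point
`ς* ∈ (0,K)` satisfying the first-order condition and `|ς* - σ^ψ(t,s,y)| ≤ C₁ ψ²`. -/
theorem optimal_volatility (d : HedgeData) (hd : d.Assumptions) (L : ℝ) (hL : 0 < L) :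
    ∃ C₁ > (0:ℝ), ∃ ψ₁ > (0:ℝ),
      ∀ t ∈ Ioo (0:ℝ) d.T, ∀ s ∈ Ioo d.K⁻¹ d.K, ∀ y ∈ Ioo d.yl d.yu,
        ∀ ϑ ∈ Icc (-L) L, ∀ ψ ∈ Ioo (0:ℝ) ψ₁,
          ∃ ςs ∈ Ioo (0:ℝ) d.K,
            IsMinOn (fun ς => d.Ham ψ t s y (d.Vs t s + ϑ * ψ) ς) (Icc (0:ℝ) d.K) ςs ∧
            HasDerivAt (fun ς => d.Ham ψ t s y (d.Vs t s + ϑ * ψ) ς) 0 ςs ∧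
            |ςs - d.sigmaPsi ψ t s y| ≤ C₁ * ψ ^ 2 :=
  optimal_volatility_general d hd.spatialAssumptions L
end

section
/- Linear-order localisation of minimisers of the Hamiltonian in the volatility variable: for every L > 0 there exist constants C > 0 and ψ₁ > 0 such that for every (t,s,y) ∈ D, every ϑ̃ ∈ [−L,L], and every ψ ∈ (0,ψ₁), every minimiser ς* over [0,K] of the function ς ↦ H^ψ(t,s,y; V̄_s(t,s) + ϑ̃ψ, ς) satisfies |σ̄(t,s) − ς*| ≤ C ψ. -/
open Set

/-!
Since `f` is uniformly strictly convex in `ς` with critical point `σ̄`, leaving `σ̄` costs at least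
`(1/ψ) c |ς - σ̄|²`. For the strategy `V̄_s + ϑ̃ψ`, the rest of the Hamiltonian is
`const - ½ G ς²` with `G` bounded uniformly in all parameters, so it gains at most `N |ς - σ̄|`.
Any `ς` that does at least as well as `σ̄` therefore satisfies `c |ς - σ̄| ≤ N ψ`.
-/

open scoped ENNReal

section QuadraticGrowth

variable {S : Set ℝ} {f : ℝ → ℝ} {a x : ℝ}

theorem add_deriv_mul_sub_le_of_convexOn {f' : ℝ} (hf : ConvexOn ℝ S f) (ha : a ∈ S) (hx : x ∈ S)
    (hfa : HasDerivWithinAt f f' S a) : f a + f' * (x - a) ≤ f x := by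
  rcases lt_trichotomy a x with h | rfl | h
  · have hslope := hf.le_slope_of_hasDerivWithinAt ha hx h hfa
    rw [slope_def_field, le_div_iff₀ (sub_pos.2 h)] at hslope
    linarith
  · simp
  · have hslope := hf.slope_le_of_hasDerivWithinAt hx ha h hfa
    rw [slope_def_field, div_le_iff₀ (sub_pos.2 h)] at hslope
    linarith

theorem add_deriv_mul_sub_add_sq_le_of_strongConvexOn {f' c : ℝ} (hf : StrongConvexOn S c f)
    (ha : a ∈ S) (hx : x ∈ S) (hfa : HasDerivWithinAt f f' S a) :
    f a + f' * (x - a) + c / 2 * (x - a) ^ 2 ≤ f x := by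
  have hconv : ConvexOn ℝ S fun z => f z - c / 2 * z ^ 2 := by
    simpa only [Real.norm_eq_abs, sq_abs] using strongConvexOn_iff_convex.1 hf
  have hderiv : HasDerivWithinAt (fun z => f z - c / 2 * z ^ 2) (f' - c * a) S a := by
    refine (hfa.sub (((hasDerivAt_pow 2 a).const_mul (c / 2)).hasDerivWithinAt)).congr_deriv ?_
    push_cast
    ring
  linarith [add_deriv_mul_sub_le_of_convexOn hconv ha hx hderiv]

theorem strongConvexOn_of_le_deriv2 {f' f'' : ℝ → ℝ} {c : ℝ} (hS : Convex ℝ S)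
    (hf : ContinuousOn f S) (hf' : ∀ z ∈ interior S, HasDerivAt f (f' z) z)
    (hf'' : ∀ z ∈ interior S, HasDerivAt f' (f'' z) z) (hc : ∀ z ∈ interior S, c ≤ f'' z) :
    StrongConvexOn S c f := by
  simp only [strongConvexOn_iff_convex, Real.norm_eq_abs, sq_abs]
  refine convexOn_of_hasDerivWithinAt2_nonneg (f' := fun z => f' z - c * z)
    (f'' := fun z => f'' z - c) hS (by fun_prop) (fun z hz => ?_) (fun z hz => ?_)
    fun z hz => sub_nonneg.2 (hc z hz)
  · refine (((hf' z hz).sub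
      ((hasDerivAt_pow 2 z).const_mul (c / 2))).congr_deriv ?_).hasDerivWithinAt
    push_cast
    ring
  · exact (((hf'' z hz).sub ((hasDerivAt_id z).const_mul c)).congr_deriv
      (by rw [mul_one])).hasDerivWithinAt

end QuadraticGrowth

theorem dist_le_of_quadratic_growth {α : Type*} [PseudoMetricSpace α] {φ g : α → ℝ} {a x : α}
    {c N ψ : ℝ} (hc : 0 < c) (hN : 0 ≤ N) (hψ : 0 < ψ)
    (hφ : c * dist x a ^ 2 ≤ φ x - φ a) (hg : g a - g x ≤ N * dist x a)
    (hle : φ x / ψ + g x ≤ φ a / ψ + g a) : dist x a ≤ N / c * ψ := by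
  have hcost : (φ x - φ a) / ψ ≤ N * dist x a := by
    rw [sub_div]
    linarith
  have hbalance : c * dist x a * dist x a ≤ N * ψ * dist x a := by
    rw [div_le_iff₀ hψ] at hcost
    linarith
  rcases (dist_nonneg (x := x) (y := a)).eq_or_lt with h | h
  · rw [← h]
    positivity
  · rw [div_mul_eq_mul_div, le_div_iff₀ hc, mul_comm]
    exact le_of_mul_le_mul_right hbalance h

theorem half_mul_sq_sub_sq_le {a b G K N : ℝ} (ha : a ∈ Icc 0 K) (hb : b ∈ Icc 0 K)
    (hG : |G| ≤ N) : G / 2 * (a ^ 2 - b ^ 2) ≤ K * N * |a - b| := by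
  have hsum : |a + b| ≤ 2 * K :=
    abs_le.2 ⟨by linarith [ha.1, hb.1, ha.2], by linarith [ha.2, hb.2]⟩
  have hN : 0 ≤ N := (abs_nonneg G).trans hG
  calc G / 2 * (a ^ 2 - b ^ 2) ≤ |G / 2 * (a ^ 2 - b ^ 2)| := le_abs_self _
    _ = |G| / 2 * (|a + b| * |a - b|) := by
      rw [abs_mul, sq_sub_sq, abs_mul, abs_div, abs_two]
    _ ≤ N / 2 * (2 * K * |a - b|) := by gcongr
    _ = K * N * |a - b| := by ring

theorem exists_abs_le_Ioo_of_continuousOn_Icc {a b : ℝ} {u : ℝ → ℝ}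
    (hu : ContinuousOn u (Icc a b)) : ∃ M, ∀ y ∈ Ioo a b, |u y| ≤ M := by
  obtain ⟨M, hM⟩ := isCompact_Icc.exists_bound_of_continuousOn hu
  exact ⟨M, fun y hy => hM y (Ioo_subset_Icc_self hy)⟩

theorem exists_abs_le_Ioo_prod_of_continuousOn_Icc_prod {a₁ b₁ a₂ b₂ a₃ b₃ : ℝ}
    {g : ℝ → ℝ → ℝ → ℝ} (hg : ContinuousOn (fun p : ℝ × ℝ × ℝ => g p.1 p.2.1 p.2.2)
      (Icc a₁ b₁ ×ˢ Icc a₂ b₂ ×ˢ Icc a₃ b₃)) :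
    ∃ M, ∀ t ∈ Ioo a₁ b₁, ∀ s ∈ Ioo a₂ b₂, ∀ y ∈ Ioo a₃ b₃, |g t s y| ≤ M := by
  have hcompact : IsCompact (Icc a₁ b₁ ×ˢ Icc a₂ b₂ ×ˢ Icc a₃ b₃) :=
    isCompact_Icc.prod (isCompact_Icc.prod isCompact_Icc)
  obtain ⟨M, hM⟩ := hcompact.exists_bound_of_continuousOn hg
  exact ⟨M, fun t ht s hs y hy => hM (t, s, y)
    ⟨Ioo_subset_Icc_self ht, Ioo_subset_Icc_self hs, Ioo_subset_Icc_self hy⟩⟩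

namespace HedgeData

variable {d : HedgeData}

/-- The function `G` for which the part of `ς ↦ H^ψ(t,s,y; V̄_s + ϑψ, ς)` not involving the penalty
`f` equals `-½ G ς²` up to an additive constant. The argument `ϑ` is the rescaled deviation `ϑ̃`
from the reference strategy. -/
noncomputable def volCoeff (d : HedgeData) (ψ ϑ t s y : ℝ) : ℝ :=
  s ^ 2 * d.Vss t s * d.wPsiY ψ t s y
    - s ^ 2 * (d.wPsiSS ψ t s y + 2 * (ϑ * ψ * d.wPsiSY ψ t s y)
      + (ϑ * ψ) ^ 2 * d.wPsiYY ψ t s y)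

theorem Ham_sub_Ham (d : HedgeData) (ψ ϑ t s y ς ς' : ℝ) :
    d.Ham ψ t s y (d.Vs t s + ϑ * ψ) ς - d.Ham ψ t s y (d.Vs t s + ϑ * ψ) ς' =
      (d.U1 y * d.f t s y ς / ψ - d.volCoeff ψ ϑ t s y / 2 * ς ^ 2)
        - (d.U1 y * d.f t s y ς' / ψ - d.volCoeff ψ ϑ t s y / 2 * ς' ^ 2) := by
  simp only [Ham, volCoeff]
  ring

/-- The assumptions of the localisation estimate, with the field names of `Assumptions` where they
correspond: a twice differentiable penalty that is uniformly strongly convex in `ς` and critical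
at `σ̄`, a utility with bounded derivatives and slope bounded away from zero, and correction terms
that are bounded together with their spatial derivatives. -/
structure LocalisationAssumptions (d : HedgeData) : Prop where
  sb_mem : ∀ t ∈ Ioo (0:ℝ) d.T, ∀ s ∈ Ioo d.K⁻¹ d.K, d.sb t s ∈ Icc (0:ℝ) d.K
  V_derivS : ∀ t ∈ Ioo (0:ℝ) d.T, ∀ s ∈ Ioo d.K⁻¹ d.K, HasDerivAt (d.V t) (d.Vs t s) s
  V_derivSS : ∀ t ∈ Ioo (0:ℝ) d.T, ∀ s ∈ Ioo d.K⁻¹ d.K, HasDerivAt (d.Vs t) (d.Vss t s) s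
  Vss_bdd : ∃ M, ∀ t ∈ Ioo (0:ℝ) d.T, ∀ s ∈ Ioo d.K⁻¹ d.K, |s ^ 2 * d.Vss t s| ≤ M
  f_deriv1 : ∀ t ∈ Ioo (0:ℝ) d.T, ∀ s ∈ Ioo d.K⁻¹ d.K, ∀ y ∈ Ioo d.yl d.yu,
    ∀ ς ∈ Icc (0:ℝ) d.K, HasDerivWithinAt (d.f t s y) (d.f1 t s y ς) (Icc 0 d.K) ς
  f_deriv2 : ∀ t ∈ Ioo (0:ℝ) d.T, ∀ s ∈ Ioo d.K⁻¹ d.K, ∀ y ∈ Ioo d.yl d.yu,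
    ∀ ς ∈ Ioo (0:ℝ) d.K, HasDerivAt (d.f1 t s y) (d.f2 t s y ς) ς
  f_crit : ∀ t ∈ Ioo (0:ℝ) d.T, ∀ s ∈ Ioo d.K⁻¹ d.K, ∀ y ∈ Ioo d.yl d.yu,
    d.f1 t s y (d.sb t s) = 0
  f2_lb : ∃ c > 0, ∀ t ∈ Ioo (0:ℝ) d.T, ∀ s ∈ Ioo d.K⁻¹ d.K, ∀ y ∈ Ioo d.yl d.yu,
    ∀ ς ∈ Ioo (0:ℝ) d.K, c ≤ d.f2 t s y ς
  U_deriv1 : ∀ y ∈ Ioo d.yl d.yu, HasDerivAt d.U (d.U1 y) y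
  U_deriv2 : ∀ y ∈ Ioo d.yl d.yu, HasDerivAt d.U1 (d.U2 y) y
  U_deriv3 : ∀ y ∈ Ioo d.yl d.yu, HasDerivAt d.U2 (d.U3 y) y
  U1_lb : ∃ m > 0, ∀ y ∈ Ioo d.yl d.yu, m ≤ d.U1 y
  U_bdd : ∀ u ∈ [d.U1, d.U2, d.U3], ∃ M, ∀ y ∈ Ioo d.yl d.yu, |u y| ≤ M
  wt_deriv : ∀ t ∈ Ioo (0:ℝ) d.T, ∀ s ∈ Ioo d.K⁻¹ d.K, ∀ y ∈ Ioo d.yl d.yu,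
    HasDerivAt (fun s' => d.wt t s' y) (d.wtS t s y) s ∧
    HasDerivAt (fun y' => d.wt t s y') (d.wtY t s y) y ∧
    HasDerivAt (fun s' => d.wtS t s' y) (d.wtSS t s y) s ∧
    HasDerivAt (fun y' => d.wtS t s y') (d.wtSY t s y) y ∧
    HasDerivAt (fun y' => d.wtY t s y') (d.wtYY t s y) y
  wh_deriv : ∀ t ∈ Ioo (0:ℝ) d.T, ∀ s ∈ Ioo d.K⁻¹ d.K, ∀ y ∈ Ioo d.yl d.yu,
    HasDerivAt (fun s' => d.wh t s' y) (d.whS t s y) s ∧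
    HasDerivAt (fun y' => d.wh t s y') (d.whY t s y) y ∧
    HasDerivAt (fun s' => d.whS t s' y) (d.whSS t s y) s ∧
    HasDerivAt (fun y' => d.whS t s y') (d.whSY t s y) y ∧
    HasDerivAt (fun y' => d.whY t s y') (d.whYY t s y) y
  wt_bdd : ∀ g ∈ [d.wt, d.wtS, d.wtY, d.wtSS, d.wtSY, d.wtYY],
    ∃ M, ∀ t ∈ Ioo (0:ℝ) d.T, ∀ s ∈ Ioo d.K⁻¹ d.K, ∀ y ∈ Ioo d.yl d.yu, |g t s y| ≤ M
  wh_bdd : ∀ g ∈ [d.wh, d.whS, d.whY, d.whSS, d.whSY, d.whYY],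
    ∃ M, ∀ t ∈ Ioo (0:ℝ) d.T, ∀ s ∈ Ioo d.K⁻¹ d.K, ∀ y ∈ Ioo d.yl d.yu, |g t s y| ≤ M

namespace Assumptions

theorem localisationAssumptions (hd : d.Assumptions) : d.LocalisationAssumptions where
  sb_mem t ht s hs := hd.sb_mem t (Ioo_subset_Icc_self ht) s (Ioo_subset_Icc_self hs)
  V_derivS := hd.V_derivS
  V_derivSS := hd.V_derivSS
  Vss_bdd := ⟨d.K, hd.Vss_bdd⟩
  f_deriv1 t _ s _ y _ ς _ := (hd.f_deriv1 t s y ς).hasDerivWithinAt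
  f_deriv2 t _ s _ y _ ς _ := hd.f_deriv2 t s y ς
  f_crit t ht s hs y hy := (hd.f_min t ht s hs y hy).2
  f2_lb := ⟨1 / d.K, one_div_pos.2 (one_pos.trans hd.hK), fun t ht s hs y hy ς hς =>
    (hd.f2_bdd t ht s hs y hy ς (Ioo_subset_Icc_self hς)).1⟩
  U_deriv1 y _ := hd.U_deriv1 y
  U_deriv2 y _ := hd.U_deriv2 y
  U_deriv3 y _ := hd.U_deriv3 y
  U1_lb := by
    obtain ⟨m, hm, hle⟩ := (isCompact_Icc (a := d.yl) (b := d.yu)).exists_forall_le'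
      (HasDerivAt.continuousOn fun y _ => hd.U_deriv2 y) fun y _ => hd.U1_pos y
    exact ⟨m, hm, fun y hy => hle y (Ioo_subset_Icc_self hy)⟩
  U_bdd := by
    have hU1 : ContinuousOn d.U1 (Icc d.yl d.yu) := HasDerivAt.continuousOn fun y _ => hd.U_deriv2 y
    have hU2 : ContinuousOn d.U2 (Icc d.yl d.yu) := HasDerivAt.continuousOn fun y _ => hd.U_deriv3 y
    have hU3 : ContinuousOn d.U3 (Icc d.yl d.yu) := hd.U3_cont.continuousOn
    intro u hu
    fin_cases hu
    exacts [exists_abs_le_Ioo_of_continuousOn_Icc hU1, exists_abs_le_Ioo_of_continuousOn_Icc hU2,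
      exists_abs_le_Ioo_of_continuousOn_Icc hU3]
  wt_deriv t ht s hs y hy := (hd.wt_deriv t ht s hs y hy).2
  wh_deriv t ht s hs y hy := (hd.wh_deriv t ht s hs y hy).2
  wt_bdd := List.forall_mem_cons.2 ⟨exists_abs_le_Ioo_prod_of_continuousOn_Icc_prod hd.wt_cont,
    fun g hg => ⟨d.K, hd.wt_bdd g (List.mem_cons_of_mem _ hg)⟩⟩
  wh_bdd := List.forall_mem_cons.2 ⟨exists_abs_le_Ioo_prod_of_continuousOn_Icc_prod hd.wh_cont,
    fun g hg => ⟨d.K, hd.wh_bdd g (List.mem_cons_of_mem _ hg)⟩⟩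

end Assumptions

namespace LocalisationAssumptions

-- Membership in `ℓ^∞` over an arbitrary family of parameters encodes uniform boundedness.
section UniformBounds

variable {ι : Type*} {ψ ϑ t s y : ι → ℝ}

theorem memℓp_utility (hd : d.LocalisationAssumptions) {u : ℝ → ℝ} (hu : u ∈ [d.U1, d.U2, d.U3])
    (hy : ∀ i, y i ∈ Ioo d.yl d.yu) : Memℓp (fun i => u (y i)) ∞ := by
  obtain ⟨M, hM⟩ := hd.U_bdd u hu
  exact memℓp_infty ⟨M, forall_mem_range.2 fun i => hM _ (hy i)⟩

theorem memℓp_wt (hd : d.LocalisationAssumptions) {g : ℝ → ℝ → ℝ → ℝ}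
    (hg : g ∈ [d.wt, d.wtS, d.wtY, d.wtSS, d.wtSY, d.wtYY]) (ht : ∀ i, t i ∈ Ioo 0 d.T)
    (hs : ∀ i, s i ∈ Ioo d.K⁻¹ d.K) (hy : ∀ i, y i ∈ Ioo d.yl d.yu) :
    Memℓp (fun i => g (t i) (s i) (y i)) ∞ := by
  obtain ⟨M, hM⟩ := hd.wt_bdd g hg
  exact memℓp_infty ⟨M, forall_mem_range.2 fun i => hM _ (ht i) _ (hs i) _ (hy i)⟩

theorem memℓp_wh (hd : d.LocalisationAssumptions) {g : ℝ → ℝ → ℝ → ℝ}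
    (hg : g ∈ [d.wh, d.whS, d.whY, d.whSS, d.whSY, d.whYY]) (ht : ∀ i, t i ∈ Ioo 0 d.T)
    (hs : ∀ i, s i ∈ Ioo d.K⁻¹ d.K) (hy : ∀ i, y i ∈ Ioo d.yl d.yu) :
    Memℓp (fun i => g (t i) (s i) (y i)) ∞ := by
  obtain ⟨M, hM⟩ := hd.wh_bdd g hg
  exact memℓp_infty ⟨M, forall_mem_range.2 fun i => hM _ (ht i) _ (hs i) _ (hy i)⟩

theorem memℓp_wPsiY (hd : d.LocalisationAssumptions) (hψ : Memℓp ψ ∞)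
    (ht : ∀ i, t i ∈ Ioo 0 d.T) (hs : ∀ i, s i ∈ Ioo d.K⁻¹ d.K)
    (hy : ∀ i, y i ∈ Ioo d.yl d.yu) :
    Memℓp (fun i => d.wPsiY (ψ i) (t i) (s i) (y i)) ∞ := by
  have hU1 := hd.memℓp_utility (u := d.U1) (by simp) hy
  have hU2 := hd.memℓp_utility (u := d.U2) (by simp) hy
  have hwt := hd.memℓp_wt (g := d.wt) (by simp) ht hs hy
  have hwtY := hd.memℓp_wt (g := d.wtY) (by simp) ht hs hy
  have hwh := hd.memℓp_wh (g := d.wh) (by simp) ht hs hy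
  have hwhY := hd.memℓp_wh (g := d.whY) (by simp) ht hs hy
  exact (hU1.sub (((hU2.infty_mul hwt).add (hU1.infty_mul hwtY)).infty_mul hψ)).add
    (((hU2.infty_mul hwh).add (hU1.infty_mul hwhY)).infty_mul (hψ.infty_pow 2))

theorem memℓp_wPsiSS (hd : d.LocalisationAssumptions) (hψ : Memℓp ψ ∞)
    (ht : ∀ i, t i ∈ Ioo 0 d.T) (hs : ∀ i, s i ∈ Ioo d.K⁻¹ d.K)
    (hy : ∀ i, y i ∈ Ioo d.yl d.yu) :
    Memℓp (fun i => d.wPsiSS (ψ i) (t i) (s i) (y i)) ∞ := by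
  have hU1 := hd.memℓp_utility (u := d.U1) (by simp) hy
  have hwtSS := hd.memℓp_wt (g := d.wtSS) (by simp) ht hs hy
  have hwhSS := hd.memℓp_wh (g := d.whSS) (by simp) ht hs hy
  exact ((hU1.infty_mul hwtSS).neg.infty_mul hψ).add
    ((hU1.infty_mul hwhSS).infty_mul (hψ.infty_pow 2))

theorem memℓp_wPsiSY (hd : d.LocalisationAssumptions) (hψ : Memℓp ψ ∞)
    (ht : ∀ i, t i ∈ Ioo 0 d.T) (hs : ∀ i, s i ∈ Ioo d.K⁻¹ d.K)
    (hy : ∀ i, y i ∈ Ioo d.yl d.yu) :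
    Memℓp (fun i => d.wPsiSY (ψ i) (t i) (s i) (y i)) ∞ := by
  have hU1 := hd.memℓp_utility (u := d.U1) (by simp) hy
  have hU2 := hd.memℓp_utility (u := d.U2) (by simp) hy
  have hwtS := hd.memℓp_wt (g := d.wtS) (by simp) ht hs hy
  have hwtSY := hd.memℓp_wt (g := d.wtSY) (by simp) ht hs hy
  have hwhS := hd.memℓp_wh (g := d.whS) (by simp) ht hs hy
  have hwhSY := hd.memℓp_wh (g := d.whSY) (by simp) ht hs hy
  exact (((hU2.infty_mul hwtS).add (hU1.infty_mul hwtSY)).neg.infty_mul hψ).add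
    (((hU2.infty_mul hwhS).add (hU1.infty_mul hwhSY)).infty_mul (hψ.infty_pow 2))

theorem memℓp_wPsiYY (hd : d.LocalisationAssumptions) (hψ : Memℓp ψ ∞)
    (ht : ∀ i, t i ∈ Ioo 0 d.T) (hs : ∀ i, s i ∈ Ioo d.K⁻¹ d.K)
    (hy : ∀ i, y i ∈ Ioo d.yl d.yu) :
    Memℓp (fun i => d.wPsiYY (ψ i) (t i) (s i) (y i)) ∞ := by
  have hU1 := hd.memℓp_utility (u := d.U1) (by simp) hy
  have hU2 := hd.memℓp_utility (u := d.U2) (by simp) hy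
  have hU3 := hd.memℓp_utility (u := d.U3) (by simp) hy
  have hwt := hd.memℓp_wt (g := d.wt) (by simp) ht hs hy
  have hwtY := hd.memℓp_wt (g := d.wtY) (by simp) ht hs hy
  have hwtYY := hd.memℓp_wt (g := d.wtYY) (by simp) ht hs hy
  have hwh := hd.memℓp_wh (g := d.wh) (by simp) ht hs hy
  have hwhY := hd.memℓp_wh (g := d.whY) (by simp) ht hs hy
  have hwhYY := hd.memℓp_wh (g := d.whYY) (by simp) ht hs hy
  have hlin := ((hU3.infty_mul hwt).add ((hU2.const_mul 2).infty_mul hwtY)).add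
    (hU1.infty_mul hwtYY)
  have hquad := ((hU3.infty_mul hwh).add ((hU2.const_mul 2).infty_mul hwhY)).add
    (hU1.infty_mul hwhYY)
  exact (hU2.sub (hlin.infty_mul hψ)).add (hquad.infty_mul (hψ.infty_pow 2))

theorem memℓp_volCoeff (hd : d.LocalisationAssumptions) (hψ : Memℓp ψ ∞) (hϑ : Memℓp ϑ ∞)
    (ht : ∀ i, t i ∈ Ioo 0 d.T) (hs : ∀ i, s i ∈ Ioo d.K⁻¹ d.K)
    (hy : ∀ i, y i ∈ Ioo d.yl d.yu) :
    Memℓp (fun i => d.volCoeff (ψ i) (ϑ i) (t i) (s i) (y i)) ∞ := by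
  obtain ⟨M, hM⟩ := hd.Vss_bdd
  have hVss : Memℓp (fun i => s i ^ 2 * d.Vss (t i) (s i)) ∞ :=
    memℓp_infty ⟨M, forall_mem_range.2 fun i => hM _ (ht i) _ (hs i)⟩
  have hs_mem : Memℓp s ∞ := memℓp_infty ⟨max |d.K⁻¹| |d.K|, forall_mem_range.2 fun i =>
    abs_le_max_abs_abs (hs i).1.le (hs i).2.le⟩
  have hdev := hϑ.infty_mul hψ
  have hdiffusion := ((hd.memℓp_wPsiSS hψ ht hs hy).add
    ((hdev.infty_mul (hd.memℓp_wPsiSY hψ ht hs hy)).const_mul 2)).add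
      ((hdev.infty_pow 2).infty_mul (hd.memℓp_wPsiYY hψ ht hs hy))
  exact (hVss.infty_mul (hd.memℓp_wPsiY hψ ht hs hy)).sub
    ((hs_mem.infty_pow 2).infty_mul hdiffusion)

end UniformBounds

theorem exists_abs_volCoeff_le (hd : d.LocalisationAssumptions) (L Ψ : ℝ) :
    ∃ N, ∀ t ∈ Ioo 0 d.T, ∀ s ∈ Ioo d.K⁻¹ d.K, ∀ y ∈ Ioo d.yl d.yu,
      ∀ ϑ ∈ Icc (-L) L, ∀ ψ ∈ Ioc 0 Ψ, |d.volCoeff ψ ϑ t s y| ≤ N := by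
  let ι := Ioo 0 d.T × Ioo d.K⁻¹ d.K × Ioo d.yl d.yu × Icc (-L) L × Ioc 0 Ψ
  have hψ_bdd : Memℓp (fun i : ι => (i.2.2.2.2 : ℝ)) ∞ :=
    memℓp_infty ⟨Ψ, forall_mem_range.2 fun ⟨_, _, _, _, ψ⟩ =>
      (abs_of_pos ψ.2.1).trans_le ψ.2.2⟩
  have hϑ_bdd : Memℓp (fun i : ι => (i.2.2.2.1 : ℝ)) ∞ :=
    memℓp_infty ⟨L, forall_mem_range.2 fun ⟨_, _, _, ϑ, _⟩ => abs_le.2 ϑ.2⟩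
  obtain ⟨N, hN⟩ := (hd.memℓp_volCoeff hψ_bdd hϑ_bdd (fun i => i.1.2) (fun i => i.2.1.2)
    fun i => i.2.2.1.2).bddAbove
  exact ⟨N, fun t ht s hs y hy ϑ hϑ ψ hψ =>
    forall_mem_range.1 hN ⟨⟨t, ht⟩, ⟨s, hs⟩, ⟨y, hy⟩, ⟨ϑ, hϑ⟩, ⟨ψ, hψ⟩⟩⟩

theorem exists_mul_sq_le_f_sub (hd : d.LocalisationAssumptions) :
    ∃ c > 0, ∀ t ∈ Ioo 0 d.T, ∀ s ∈ Ioo d.K⁻¹ d.K, ∀ y ∈ Ioo d.yl d.yu, ∀ ς ∈ Icc 0 d.K,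
      c * (ς - d.sb t s) ^ 2 ≤ d.f t s y ς - d.f t s y (d.sb t s) := by
  obtain ⟨c, hc, hf2⟩ := hd.f2_lb
  refine ⟨c / 2, half_pos hc, fun t ht s hs y hy ς hς => ?_⟩
  have hderiv := hd.f_deriv1 t ht s hs y hy
  have hsb := hd.sb_mem t ht s hs
  have hstrong : StrongConvexOn (Icc 0 d.K) c (d.f t s y) := by
    refine strongConvexOn_of_le_deriv2 (f' := d.f1 t s y) (f'' := d.f2 t s y) (convex_Icc 0 d.K)
      (fun z hz => (hderiv z hz).continuousWithinAt) ?_ ?_ ?_ <;>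
      rw [interior_Icc]
    · exact fun z hz => (hderiv z (Ioo_subset_Icc_self hz)).hasDerivAt (Icc_mem_nhds hz.1 hz.2)
    · exact hd.f_deriv2 t ht s hs y hy
    · exact hf2 t ht s hs y hy
  have htaylor := add_deriv_mul_sub_add_sq_le_of_strongConvexOn hstrong hsb hς (hderiv _ hsb)
  rw [hd.f_crit t ht s hs y hy] at htaylor
  linarith

theorem exists_mul_sq_le_U1_mul_f_sub (hd : d.LocalisationAssumptions) :
    ∃ c > 0, ∀ t ∈ Ioo 0 d.T, ∀ s ∈ Ioo d.K⁻¹ d.K, ∀ y ∈ Ioo d.yl d.yu, ∀ ς ∈ Icc 0 d.K,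
      c * (ς - d.sb t s) ^ 2 ≤ d.U1 y * d.f t s y ς - d.U1 y * d.f t s y (d.sb t s) := by
  obtain ⟨m, hm, hU1⟩ := hd.U1_lb
  obtain ⟨c, hc, hf⟩ := hd.exists_mul_sq_le_f_sub
  refine ⟨m * c, by positivity, fun t ht s hs y hy ς hς => ?_⟩
  rw [mul_assoc, ← mul_sub]
  exact mul_le_mul (hU1 y hy) (hf t ht s hs y hy ς hς) (by positivity) (hm.le.trans (hU1 y hy))

end LocalisationAssumptions

end HedgeData

theorem minimiser_localisation_general (d : HedgeData) (hd : d.LocalisationAssumptions) (L Ψ : ℝ) :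
    ∃ C > (0:ℝ), ∀ t ∈ Ioo (0:ℝ) d.T, ∀ s ∈ Ioo d.K⁻¹ d.K, ∀ y ∈ Ioo d.yl d.yu,
      ∀ ϑ ∈ Icc (-L) L, ∀ ψ ∈ Ioc (0:ℝ) Ψ, ∀ ς ∈ Icc (0:ℝ) d.K,
        d.Ham ψ t s y (d.Vs t s + ϑ * ψ) ς ≤ d.Ham ψ t s y (d.Vs t s + ϑ * ψ) (d.sb t s) →
        |d.sb t s - ς| ≤ C * ψ := by
  obtain ⟨c, hc, hgrowth⟩ := hd.exists_mul_sq_le_U1_mul_f_sub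
  obtain ⟨N, hN⟩ := hd.exists_abs_volCoeff_le L Ψ
  refine ⟨max (d.K * N / c) 1, lt_max_of_lt_right one_pos,
    fun t ht s hs y hy ϑ hϑ ψ hψ ς hς hle => ?_⟩
  have hG := hN t ht s hs y hy ϑ hϑ ψ hψ
  have hgain := half_mul_sq_sub_sq_le hς (hd.sb_mem t ht s hs) hG
  have hle' := (d.Ham_sub_Ham ψ ϑ t s y ς (d.sb t s)).symm.trans_le (sub_nonpos.2 hle)
  have hKN : 0 ≤ d.K * N := mul_nonneg (hς.1.trans hς.2) ((abs_nonneg _).trans hG)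
  have hdist : dist ς (d.sb t s) ≤ d.K * N / c * ψ := by
    refine dist_le_of_quadratic_growth (φ := fun z => d.U1 y * d.f t s y z)
      (g := fun z => -(d.volCoeff ψ ϑ t s y / 2 * z ^ 2)) hc hKN hψ.1 ?_ ?_ ?_
    · simpa only [Real.dist_eq, sq_abs] using hgrowth t ht s hs y hy ς hς
    · rw [Real.dist_eq]
      linarith
    · linarith
  rw [abs_sub_comm, ← Real.dist_eq]
  exact hdist.trans (mul_le_mul_of_nonneg_right (le_max_left _ _) hψ.1.le)

/-- **Linear-order localisation of minimisers of the Hamiltonian in the volatility variable.**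
For every `L > 0` there are `C > 0` and `ψ₁ > 0` such that for every `(t,s,y) ∈ D`,
every `ϑ̃ ∈ [-L,L]` and every `ψ ∈ (0,ψ₁)`, every minimiser `ς*` over `[0,K]` of
`ς ↦ H^ψ(t,s,y; V̄_s(t,s) + ϑ̃ψ, ς)` satisfies `|σ̄(t,s) - ς*| ≤ C ψ`. -/
theorem minimiser_localisation (d : HedgeData) (hd : d.Assumptions) (L : ℝ) (hL : 0 < L) :
    ∃ C > (0:ℝ), ∃ ψ₁ > (0:ℝ),
      ∀ t ∈ Ioo (0:ℝ) d.T, ∀ s ∈ Ioo d.K⁻¹ d.K, ∀ y ∈ Ioo d.yl d.yu,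
        ∀ ϑ ∈ Icc (-L) L, ∀ ψ ∈ Ioo (0:ℝ) ψ₁, ∀ ςs ∈ Icc (0:ℝ) d.K,
          IsMinOn (fun ς => d.Ham ψ t s y (d.Vs t s + ϑ * ψ) ς) (Icc (0:ℝ) d.K) ςs →
          |d.sb t s - ςs| ≤ C * ψ := by
  obtain ⟨C, hC, hloc⟩ := minimiser_localisation_general d hd.localisationAssumptions L 1
  exact ⟨C, hC, 1, one_pos, fun t ht s hs y hy ϑ hϑ ψ hψ ς hς hmin =>
    hloc t ht s hs y hy ϑ hϑ ψ (Ioo_subset_Ioc_self hψ) ς hς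
      (hmin (hd.localisationAssumptions.sb_mem t ht s hs))⟩
end

section
/- Existence and characterisation of the almost optimal strategy (Lemma on the optimal strategy): there exist constants C₁ > 0 and ψ₁ > 0 such that for every (t,s,y) ∈ D and every ψ ∈ (0,ψ₁) there exists a real number ϑ* = ϑ*(t,s,y,ψ), not depending on ς, such that for every ς ∈ [0,K] the point ϑ* maximises the function ϑ ↦ H^ψ(t,s,y; ϑ, ς) over ℝ, satisfies the first-order condition ∂H^ψ/∂ϑ (t,s,y; ϑ*, ς) = 0, and satisfies the estimate |ϑ* − θ^ψ(t,s,y)| ≤ C₁ ψ². -/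
open Set

/-!
The Hamiltonian is a quadratic in `ϑ - V̄_s` whose linear and leading coefficients are, up to the
common factor `½ ς² s² ≥ 0`, free of `ς`, so for `w^ψ_yy < 0` it is maximal at the root of the
linear equation `w^ψ_sy + w^ψ_yy (ϑ - V̄_s) = 0`, for every `ς` at once. The term `θ̃ ψ` solves
this equation up to `O(ψ²)`: `θ̃` is chosen so that the terms of order `ψ` in `w^ψ_sy + U'' θ̃ ψ`
cancel, and `w^ψ_yy = U'' + O(ψ)`. Since `w^ψ_yy` stays away from `0`, the residual bounds the
distance between `θ̃ ψ` and the exact root.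
-/

theorem quadratic_eq_vertex_add_sq {𝕜 : Type*} [Field 𝕜] {q : 𝕜} (hq : q ≠ 0) (a p x : 𝕜) :
    a + 2 * x * p + x ^ 2 * q = a - p ^ 2 / q + q * (x + p / q) ^ 2 := by
  field_simp
  ring

-- The root of `p + q * X` differs from `x` by the residual `p + q * x` over the slope `q`.
theorem abs_neg_div_sub_le {𝕜 : Type*} [Field 𝕜] [LinearOrder 𝕜] [IsStrictOrderedRing 𝕜]
    {q : 𝕜} (hq : q ≠ 0) (p q₀ x : 𝕜) :
    |-(p / q) - x| ≤ (|p + q₀ * x| + |q - q₀| * |x|) / |q| := by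
  have hresidual : -(p / q) - x = -((p + q₀ * x) + (q - q₀) * x) / q := by
    field_simp
    ring
  rw [hresidual, abs_div, abs_neg, ← abs_mul]
  gcongr
  exact abs_add_le _ _

section BilinearBounds

variable {R : Type*} [CommRing R] [LinearOrder R] [IsStrictOrderedRing R] {L a₁ a₂ a₃ b₁ b₂ b₃ : R}

theorem abs_mul_add_mul_le (ha₁ : |a₁| ≤ L) (ha₂ : |a₂| ≤ L) (hb₁ : |b₁| ≤ L)
    (hb₂ : |b₂| ≤ L) : |a₁ * b₁ + a₂ * b₂| ≤ 2 * L ^ 2 := by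
  have hL : 0 ≤ L := (abs_nonneg a₁).trans ha₁
  calc |a₁ * b₁ + a₂ * b₂| ≤ |a₁| * |b₁| + |a₂| * |b₂| := by
        simpa only [abs_mul] using abs_add_le (a₁ * b₁) (a₂ * b₂)
    _ ≤ L * L + L * L := by gcongr
    _ = 2 * L ^ 2 := by ring

theorem abs_mul_add_two_mul_mul_add_mul_le (ha₁ : |a₁| ≤ L) (ha₂ : |a₂| ≤ L) (ha₃ : |a₃| ≤ L)
    (hb₁ : |b₁| ≤ L) (hb₂ : |b₂| ≤ L) (hb₃ : |b₃| ≤ L) :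
    |a₁ * b₁ + 2 * a₂ * b₂ + a₃ * b₃| ≤ 4 * L ^ 2 :=
  calc |a₁ * b₁ + 2 * a₂ * b₂ + a₃ * b₃|
      = |(a₁ * b₁ + a₂ * b₂) + (a₂ * b₂ + a₃ * b₃)| := by ring_nf
    _ ≤ |a₁ * b₁ + a₂ * b₂| + |a₂ * b₂ + a₃ * b₃| := abs_add_le _ _
    _ ≤ 2 * L ^ 2 + 2 * L ^ 2 :=
        add_le_add (abs_mul_add_mul_le ha₁ ha₂ hb₁ hb₂) (abs_mul_add_mul_le ha₂ ha₃ hb₂ hb₃)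
    _ = 4 * L ^ 2 := by ring

end BilinearBounds

theorem eventually_forall_norm_le_of_isCompact {X E : Type*} [TopologicalSpace X]
    [SeminormedAddCommGroup E] {S : Set X} {g : X → E} (hS : IsCompact S)
    (hg : ContinuousOn g S) : ∀ᶠ L in Filter.atTop, ∀ x ∈ S, ‖g x‖ ≤ L := by
  obtain ⟨B, hB⟩ := hS.exists_bound_of_continuousOn hg
  filter_upwards [Filter.eventually_ge_atTop B] with L hL x hx
  exact (hB x hx).trans hL

namespace HedgeData

/-- The maximiser `ϑ*` of the Hamiltonian: the vertex `V̄_s - w^ψ_sy / w^ψ_yy` of the quadratic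
`ϑ ↦ H^ψ(t,s,y;ϑ,ς)`, meaningful when `w^ψ_yy ≠ 0`. -/
noncomputable def thetaStar (d : HedgeData) (ψ t s y : ℝ) : ℝ :=
  d.Vs t s - d.wPsiSY ψ t s y / d.wPsiYY ψ t s y

/-- Uniform control of the second-order expansion of `w^ψ` on a region `D` of points `(t,s,y)`,
from which `w^ψ_yy < 0` and the size of `ϑ* - θ^ψ` follow for small `ψ`: the factors out of which
`w^ψ_sy` and `w^ψ_yy` are built are bounded by `L`, and `U'' ≤ -c`. The `_deriv` fields fix
the meaning of the data as partial derivatives on `D`. -/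
structure IsControlledOn (d : HedgeData) (D : Set (ℝ × ℝ × ℝ)) (L c : ℝ) : Prop where
  V_deriv : ∀ ⦃t s y⦄, (t, s, y) ∈ D →
    HasDerivAt (d.V t) (d.Vs t s) s ∧ HasDerivAt (d.Vs t) (d.Vss t s) s
  U_deriv : ∀ ⦃t s y⦄, (t, s, y) ∈ D →
    HasDerivAt d.U (d.U1 y) y ∧ HasDerivAt d.U1 (d.U2 y) y ∧ HasDerivAt d.U2 (d.U3 y) y
  wt_deriv : ∀ ⦃t s y⦄, (t, s, y) ∈ D →
    HasDerivAt (fun s' => d.wt t s' y) (d.wtS t s y) s ∧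
    HasDerivAt (fun y' => d.wt t s y') (d.wtY t s y) y ∧
    HasDerivAt (fun s' => d.wtS t s' y) (d.wtSS t s y) s ∧
    HasDerivAt (fun y' => d.wtS t s y') (d.wtSY t s y) y ∧
    HasDerivAt (fun y' => d.wtY t s y') (d.wtYY t s y) y
  wh_deriv : ∀ ⦃t s y⦄, (t, s, y) ∈ D →
    HasDerivAt (fun s' => d.wh t s' y) (d.whS t s y) s ∧
    HasDerivAt (fun y' => d.wh t s y') (d.whY t s y) y ∧
    HasDerivAt (fun s' => d.whS t s' y) (d.whSS t s y) s ∧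
    HasDerivAt (fun y' => d.whS t s y') (d.whSY t s y) y ∧
    HasDerivAt (fun y' => d.whY t s y') (d.whYY t s y) y
  U2_le : ∀ ⦃t s y⦄, (t, s, y) ∈ D → d.U2 y ≤ -c
  U_bdd : ∀ g ∈ [d.U1, d.U2, d.U3], ∀ ⦃t s y⦄, (t, s, y) ∈ D → |g y| ≤ L
  wt_bdd : ∀ g ∈ [d.wt, d.wtS, d.wtY, d.wtSY, d.wtYY], ∀ ⦃t s y⦄, (t, s, y) ∈ D →
    |g t s y| ≤ L
  wh_bdd : ∀ g ∈ [d.wh, d.whS, d.whY, d.whSY, d.whYY], ∀ ⦃t s y⦄, (t, s, y) ∈ D →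
    |g t s y| ≤ L

variable {d : HedgeData} {ψ t s y : ℝ}

theorem differentiable_Ham (d : HedgeData) (ψ t s y ς : ℝ) :
    Differentiable ℝ fun ϑ => d.Ham ψ t s y ϑ ς := by
  unfold Ham
  fun_prop

theorem Ham_eq_Ham_thetaStar_add_sq (hYY : d.wPsiYY ψ t s y ≠ 0) (ϑ ς : ℝ) :
    d.Ham ψ t s y ϑ ς = d.Ham ψ t s y (d.thetaStar ψ t s y) ς
      + 1 / 2 * (ς * s * (ϑ - d.thetaStar ψ t s y)) ^ 2 * d.wPsiYY ψ t s y := by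
  simp only [Ham, thetaStar, quadratic_eq_vertex_add_sq hYY]
  ring

theorem Ham_le_Ham_thetaStar (hYY : d.wPsiYY ψ t s y < 0) (ϑ ς : ℝ) :
    d.Ham ψ t s y ϑ ς ≤ d.Ham ψ t s y (d.thetaStar ψ t s y) ς := by
  rw [Ham_eq_Ham_thetaStar_add_sq hYY.ne ϑ]
  exact add_le_of_nonpos_right (mul_nonpos_of_nonneg_of_nonpos (by positivity) hYY.le)

theorem hasDerivAt_Ham_thetaStar (hYY : d.wPsiYY ψ t s y < 0) (ς : ℝ) :
    HasDerivAt (fun ϑ => d.Ham ψ t s y ϑ ς) 0 (d.thetaStar ψ t s y) := by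
  have hmax : IsLocalMax (fun ϑ => d.Ham ψ t s y ϑ ς) (d.thetaStar ψ t s y) :=
    Filter.Eventually.of_forall fun ϑ => Ham_le_Ham_thetaStar hYY ϑ ς
  exact hmax.deriv_eq_zero ▸ (d.differentiable_Ham ψ t s y ς _).hasDerivAt

theorem U2_mul_thetaTilde (hU2 : d.U2 y ≠ 0) :
    d.U2 y * d.thetaTilde t s y = d.U2 y * d.wtS t s y + d.U1 y * d.wtSY t s y := by
  unfold thetaTilde
  field_simp

theorem wPsiSY_add_U2_mul_thetaTilde (hU2 : d.U2 y ≠ 0) :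
    d.wPsiSY ψ t s y + d.U2 y * (d.thetaTilde t s y * ψ)
      = (d.U2 y * d.whS t s y + d.U1 y * d.whSY t s y) * ψ ^ 2 := by
  rw [← mul_assoc, U2_mul_thetaTilde hU2, wPsiSY]
  ring

namespace IsControlledOn

variable {D : Set (ℝ × ℝ × ℝ)} {L c : ℝ}

theorem abs_thetaTilde_le (h : d.IsControlledOn D L c) (hc : 0 < c) (hp : (t, s, y) ∈ D) :
    |d.thetaTilde t s y| ≤ 2 * L ^ 2 / c := by
  have hU2 : c ≤ |d.U2 y| := le_abs.2 (Or.inr (by linarith [h.U2_le hp]))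
  rw [le_div_iff₀' hc]
  calc c * |d.thetaTilde t s y| ≤ |d.U2 y| * |d.thetaTilde t s y| := by gcongr
    _ = |d.U2 y * d.wtS t s y + d.U1 y * d.wtSY t s y| := by
        rw [← abs_mul, U2_mul_thetaTilde (abs_pos.1 (hc.trans_le hU2))]
    _ ≤ 2 * L ^ 2 :=
        abs_mul_add_mul_le (h.U_bdd d.U2 (by simp) hp) (h.U_bdd d.U1 (by simp) hp)
          (h.wt_bdd d.wtS (by simp) hp) (h.wt_bdd d.wtSY (by simp) hp)

theorem abs_wPsiSY_add_U2_mul_thetaTilde_le (h : d.IsControlledOn D L c) (hc : 0 < c)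
    (hp : (t, s, y) ∈ D) :
    |d.wPsiSY ψ t s y + d.U2 y * (d.thetaTilde t s y * ψ)| ≤ 2 * L ^ 2 * ψ ^ 2 := by
  rw [wPsiSY_add_U2_mul_thetaTilde (by linarith [h.U2_le hp]), abs_mul, abs_sq]
  gcongr
  exact abs_mul_add_mul_le (h.U_bdd d.U2 (by simp) hp) (h.U_bdd d.U1 (by simp) hp)
    (h.wh_bdd d.whS (by simp) hp) (h.wh_bdd d.whSY (by simp) hp)

theorem abs_wPsiYY_sub_U2_le (h : d.IsControlledOn D L c) (hp : (t, s, y) ∈ D)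
    (hψ : ψ ∈ Icc (0 : ℝ) 1) : |d.wPsiYY ψ t s y - d.U2 y| ≤ 8 * L ^ 2 * ψ := by
  have hU1 := h.U_bdd d.U1 (by simp) hp
  have hU2 := h.U_bdd d.U2 (by simp) hp
  have hU3 := h.U_bdd d.U3 (by simp) hp
  set A := d.U3 y * d.wt t s y + 2 * d.U2 y * d.wtY t s y + d.U1 y * d.wtYY t s y with hA_def
  set B := d.U3 y * d.wh t s y + 2 * d.U2 y * d.whY t s y + d.U1 y * d.whYY t s y with hB_def
  have hA : |A| ≤ 4 * L ^ 2 :=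
    abs_mul_add_two_mul_mul_add_mul_le hU3 hU2 hU1 (h.wt_bdd d.wt (by simp) hp)
      (h.wt_bdd d.wtY (by simp) hp) (h.wt_bdd d.wtYY (by simp) hp)
  have hB : |B| ≤ 4 * L ^ 2 :=
    abs_mul_add_two_mul_mul_add_mul_le hU3 hU2 hU1 (h.wh_bdd d.wh (by simp) hp)
      (h.wh_bdd d.whY (by simp) hp) (h.wh_bdd d.whYY (by simp) hp)
  calc |d.wPsiYY ψ t s y - d.U2 y| = |B * ψ ^ 2 - A * ψ| := by
        rw [wPsiYY, hA_def, hB_def]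
        ring_nf
    _ ≤ |B| * ψ ^ 2 + |A| * ψ := by
        refine (abs_sub _ _).trans_eq ?_
        rw [abs_mul, abs_mul, abs_sq, abs_of_nonneg hψ.1]
    _ ≤ 4 * L ^ 2 * ψ + 4 * L ^ 2 * ψ := by
        have hψsq : ψ ^ 2 ≤ ψ := pow_le_of_le_one hψ.1 hψ.2 two_ne_zero
        have := hψ.1
        gcongr
    _ = 8 * L ^ 2 * ψ := by ring

theorem wPsiYY_le_neg_half (h : d.IsControlledOn D L c) (hp : (t, s, y) ∈ D)
    (hψ : ψ ∈ Icc (0 : ℝ) 1) (hψc : 16 * L ^ 2 * ψ ≤ c) : d.wPsiYY ψ t s y ≤ -(c / 2) := by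
  linarith [h.U2_le hp, le_of_abs_le (h.abs_wPsiYY_sub_U2_le hp hψ)]

theorem abs_thetaStar_sub_thetaPsi_le (h : d.IsControlledOn D L c) (hc : 0 < c)
    (hp : (t, s, y) ∈ D) (hψ : ψ ∈ Icc (0 : ℝ) 1) (hψc : 16 * L ^ 2 * ψ ≤ c) :
    |d.thetaStar ψ t s y - d.thetaPsi ψ t s y| ≤ 4 * L ^ 2 * (c + 8 * L ^ 2) / c ^ 2 * ψ ^ 2 := by
  have hYY : d.wPsiYY ψ t s y ≤ -(c / 2) := h.wPsiYY_le_neg_half hp hψ hψc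
  have hslope : c / 2 ≤ |d.wPsiYY ψ t s y| := le_abs.2 (Or.inr (by linarith))
  have hθ : |d.thetaTilde t s y * ψ| ≤ 2 * L ^ 2 / c * ψ := by
    rw [abs_mul, abs_of_nonneg hψ.1]
    exact mul_le_mul_of_nonneg_right (h.abs_thetaTilde_le hc hp) hψ.1
  calc |d.thetaStar ψ t s y - d.thetaPsi ψ t s y|
      = |-(d.wPsiSY ψ t s y / d.wPsiYY ψ t s y) - d.thetaTilde t s y * ψ| := by
        rw [thetaStar, thetaPsi]
        ring_nf
    _ ≤ (|d.wPsiSY ψ t s y + d.U2 y * (d.thetaTilde t s y * ψ)|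
          + |d.wPsiYY ψ t s y - d.U2 y| * |d.thetaTilde t s y * ψ|) / |d.wPsiYY ψ t s y| :=
        abs_neg_div_sub_le (by linarith) _ _ _
    _ ≤ (2 * L ^ 2 * ψ ^ 2 + 8 * L ^ 2 * ψ * (2 * L ^ 2 / c * ψ)) / (c / 2) := by
        have := hψ.1
        gcongr
        · exact h.abs_wPsiSY_add_U2_mul_thetaTilde_le hc hp
        · exact h.abs_wPsiYY_sub_U2_le hp hψ
    _ = 4 * L ^ 2 * (c + 8 * L ^ 2) / c ^ 2 * ψ ^ 2 := by
        field_simp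
        ring

end IsControlledOn

namespace Assumptions

theorem continuous_U1 (hd : d.Assumptions) : Continuous d.U1 :=
  continuous_iff_continuousAt.2 fun y => (hd.U_deriv2 y).continuousAt

theorem continuous_U2 (hd : d.Assumptions) : Continuous d.U2 :=
  continuous_iff_continuousAt.2 fun y => (hd.U_deriv3 y).continuousAt

theorem exists_forall_U2_le_neg (hd : d.Assumptions) :
    ∃ c > 0, ∀ y ∈ Icc d.yl d.yu, d.U2 y ≤ -c := by
  obtain ⟨c, hc, hcU⟩ := isCompact_Icc.exists_forall_le' hd.continuous_U2.neg.continuousOn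
    fun y _ => neg_pos.2 (hd.U2_neg y)
  exact ⟨c, hc, fun y hy => le_neg.2 (hcU y hy)⟩

theorem exists_isControlledOn (hd : d.Assumptions) :
    ∃ L > 0, ∃ c > 0,
      d.IsControlledOn (Ioo 0 d.T ×ˢ Ioo d.K⁻¹ d.K ×ˢ Ioo d.yl d.yu) L c := by
  obtain ⟨c, hc, hcU⟩ := hd.exists_forall_U2_le_neg
  have hD : IsCompact (Icc 0 d.T ×ˢ Icc d.K⁻¹ d.K ×ˢ Icc d.yl d.yu) :=
    isCompact_Icc.prod (isCompact_Icc.prod isCompact_Icc)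
  have hsub : Ioo 0 d.T ×ˢ Ioo d.K⁻¹ d.K ×ˢ Ioo d.yl d.yu
      ⊆ Icc 0 d.T ×ˢ Icc d.K⁻¹ d.K ×ˢ Icc d.yl d.yu :=
    prod_mono Ioo_subset_Icc_self (prod_mono Ioo_subset_Icc_self Ioo_subset_Icc_self)
  obtain ⟨L, hLK, hU1, hU2, hU3, hwt, hwh⟩ :=
    ((Filter.eventually_ge_atTop d.K).and <|
      (eventually_forall_norm_le_of_isCompact isCompact_Icc hd.continuous_U1.continuousOn).and <|
      (eventually_forall_norm_le_of_isCompact isCompact_Icc hd.continuous_U2.continuousOn).and <|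
      (eventually_forall_norm_le_of_isCompact isCompact_Icc hd.U3_cont.continuousOn).and <|
      (eventually_forall_norm_le_of_isCompact hD hd.wt_cont).and <|
      eventually_forall_norm_le_of_isCompact hD hd.wh_cont).exists
  refine ⟨L, by linarith [hd.hK], c, hc, ?_⟩
  constructor
  case V_deriv => exact fun t s y hp => ⟨hd.V_derivS t hp.1 s hp.2.1, hd.V_derivSS t hp.1 s hp.2.1⟩
  case U_deriv => exact fun t s y _ => ⟨hd.U_deriv1 y, hd.U_deriv2 y, hd.U_deriv3 y⟩
  case wt_deriv => exact fun t s y hp => (hd.wt_deriv t hp.1 s hp.2.1 y hp.2.2).2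
  case wh_deriv => exact fun t s y hp => (hd.wh_deriv t hp.1 s hp.2.1 y hp.2.2).2
  case U2_le => exact fun t s y hp => hcU y (hsub hp).2.2
  case U_bdd =>
    simp only [List.forall_mem_cons, List.not_mem_nil, false_imp_iff, implies_true, and_true]
    exact ⟨fun t s y hp => hU1 y (hsub hp).2.2, fun t s y hp => hU2 y (hsub hp).2.2,
      fun t s y hp => hU3 y (hsub hp).2.2⟩
  case wt_bdd =>
    refine List.forall_mem_cons.2 ⟨fun t s y hp => hwt _ (hsub hp), fun g hg t s y hp => ?_⟩
    exact (hd.wt_bdd g (by grind) t hp.1 s hp.2.1 y hp.2.2).trans hLK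
  case wh_bdd =>
    refine List.forall_mem_cons.2 ⟨fun t s y hp => hwh _ (hsub hp), fun g hg t s y hp => ?_⟩
    exact (hd.wh_bdd g (by grind) t hp.1 s hp.2.1 y hp.2.2).trans hLK

end Assumptions

end HedgeData

theorem optimal_strategy_general (d : HedgeData) {D : Set (ℝ × ℝ × ℝ)} {L c : ℝ} (hL : 0 < L)
    (hc : 0 < c) (hd : d.IsControlledOn D L c) :
    ∃ C₁ > (0:ℝ), ∃ ψ₁ > (0:ℝ),
      ∀ t s y, (t, s, y) ∈ D → ∀ ψ ∈ Ioo (0:ℝ) ψ₁,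
        ∃ ϑs : ℝ,
          (∀ ς : ℝ,
            (∀ ϑ : ℝ, d.Ham ψ t s y ϑ ς ≤ d.Ham ψ t s y ϑs ς) ∧
            HasDerivAt (fun ϑ => d.Ham ψ t s y ϑ ς) 0 ϑs) ∧
          |ϑs - d.thetaPsi ψ t s y| ≤ C₁ * ψ ^ 2 := by
  refine ⟨4 * L ^ 2 * (c + 8 * L ^ 2) / c ^ 2, by positivity, min 1 (c / (16 * L ^ 2)),
    by positivity, fun t s y hp ψ hψ => ?_⟩
  obtain ⟨hψ_one, hψ_div⟩ := lt_min_iff.1 hψ.2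
  have hψ_mem : ψ ∈ Icc (0 : ℝ) 1 := ⟨hψ.1.le, hψ_one.le⟩
  have hψc : 16 * L ^ 2 * ψ ≤ c := ((lt_div_iff₀' (by positivity)).1 hψ_div).le
  have hYY : d.wPsiYY ψ t s y < 0 := by linarith [hd.wPsiYY_le_neg_half hp hψ_mem hψc]
  exact ⟨d.thetaStar ψ t s y, fun ς => ⟨fun ϑ => HedgeData.Ham_le_Ham_thetaStar hYY ϑ ς,
    HedgeData.hasDerivAt_Ham_thetaStar hYY ς⟩, hd.abs_thetaStar_sub_thetaPsi_le hc hp hψ_mem hψc⟩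

/-- **Existence and characterisation of the almost optimal strategy.**
There are `C₁ > 0` and `ψ₁ > 0` such that for every `(t,s,y) ∈ D` and every `ψ ∈ (0,ψ₁)`
there is a real number `ϑ*`, not depending on `ς`, such that for every `ς ∈ [0,K]` the
point `ϑ*` maximises `ϑ ↦ H^ψ(t,s,y;ϑ,ς)` over `ℝ`, satisfies the first-order condition
`∂H^ψ/∂ϑ = 0`, and satisfies `|ϑ* - θ^ψ(t,s,y)| ≤ C₁ ψ²`. -/
theorem optimal_strategy (d : HedgeData) (hd : d.Assumptions) :
    ∃ C₁ > (0:ℝ), ∃ ψ₁ > (0:ℝ),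
      ∀ t ∈ Ioo (0:ℝ) d.T, ∀ s ∈ Ioo d.K⁻¹ d.K, ∀ y ∈ Ioo d.yl d.yu, ∀ ψ ∈ Ioo (0:ℝ) ψ₁,
        ∃ ϑs : ℝ,
          (∀ ς ∈ Icc (0:ℝ) d.K,
            (∀ ϑ : ℝ, d.Ham ψ t s y ϑ ς ≤ d.Ham ψ t s y ϑs ς) ∧
            HasDerivAt (fun ϑ => d.Ham ψ t s y ϑ ς) 0 ϑs) ∧
          |ϑs - d.thetaPsi ψ t s y| ≤ C₁ * ψ ^ 2 := by
  obtain ⟨L, hL, c, hc, hctrl⟩ := hd.exists_isControlledOn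
  obtain ⟨C₁, hC₁, ψ₁, hψ₁, hmain⟩ := optimal_strategy_general d hL hc hctrl
  refine ⟨C₁, hC₁, ψ₁, hψ₁, fun t ht s hs y hy ψ hψ => ?_⟩
  obtain ⟨ϑs, hmax, hest⟩ := hmain t s y ⟨ht, hs, hy⟩ ψ hψ
  exact ⟨ϑs, fun ς _ => hmax ς, hest⟩
end
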